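/- arXiv:math/0112296 — 2 statements merged into one kernel-verified Lean document; each statement's English description precedes it below -/
import Mathlib

section
/- For all l₁, l₂ with a ≤ l₁ ≤ l₂ ≤ √2·a, the volume of {(A,B) ∈ C × C : l₁ ≤ dist(A,B) ≤ l₂} equals a⁶ · ∫_{l₁}^{l₂} P₂(l) dl. That is, on the interval [a, √2·a] the separation of two uniformly random points of C has probability density P₂. -/
open MeasureTheory Real Set

/-- The cube `[0,a]³` in Euclidean 3-space. -/
def cube (a : ℝ) : Set (EuclideanSpace ℝ (Fin 3)) := {x | ∀ i, x i ∈ Set.Icc 0 a}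

/-- The density of separations on the range `a ≤ l ≤ √2·a`. -/
noncomputable def P₂ (a l : ℝ) : ℝ :=
  l / a ^ 6 *
    (2 * l ^ 4 + 6 * a ^ 2 * l ^ 2 - a ^ 4 - 2 * π * a ^ 3 * (4 * l - 3 * a)
      - 8 * a * (2 * l ^ 2 + a ^ 2) * Real.sqrt (l ^ 2 - a ^ 2)
      + 24 * a ^ 2 * l ^ 2 * Real.arccos (a / l))

/-!
The separation of two uniform points of the cube has density proportional to the covariogram
`v ↦ ∏ i, (a - |v i|)⁺`, and the symmetries `v i ↦ -v i` reduce its integral over a spherical shell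
to the open positive octant. When `|v| ≤ √2 a` at most one coordinate of `v` exceeds `a`, so the
product of positive parts is the polynomial `∏ i, (a - v i)` plus three caps
`(a - v i)⁻ ∏ j ≠ i, (a - v j)`, all with the same integral because the shell is symmetric under
permutations. In spherical coordinates about the axis of the one remaining cap, that cap is
the range of polar angles below `arccos (a / l)`, and all angular integrals are elementary.
-/

/-! ### The covariogram of a box -/

theorem measure_prod_neg_add_mem {G : Type*} [AddGroup G] [MeasurableSpace G] [MeasurableAdd₂ G]
    [MeasurableNeg G] (μ : Measure G) [SFinite μ] [μ.IsAddLeftInvariant] {s D : Set G}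
    (hs : MeasurableSet s) (hD : MeasurableSet D) :
    μ.prod μ {p | p.1 ∈ s ∧ p.2 ∈ s ∧ -p.1 + p.2 ∈ D} =
      ∫⁻ v in D, μ {x | x ∈ s ∧ x + v ∈ s} ∂μ := by
  have hE : MeasurableSet {p : G × G | p.1 ∈ s ∧ p.2 ∈ s ∧ -p.1 + p.2 ∈ D} :=
    (measurable_fst hs).inter <| (measurable_snd hs).inter <|
      (measurable_fst.neg.add measurable_snd) hD
  have hshear := measurePreserving_prod_add μ μ
  rw [← hshear.measure_preimage hE.nullMeasurableSet,
    Measure.prod_apply_symm (hshear.measurable hE), ← lintegral_indicator hD]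
  refine lintegral_congr fun v ↦ ?_
  by_cases hv : v ∈ D <;> simp [hv]

theorem volume_Icc_inter_add {ι : Type*} [Fintype ι] (b v : ι → ℝ) :
    volume {x : ι → ℝ | x ∈ Icc 0 b ∧ x + v ∈ Icc 0 b} = ∏ i, ENNReal.ofReal (b i - |v i|) := by
  have hbox : {x : ι → ℝ | x ∈ Icc 0 b ∧ x + v ∈ Icc 0 b} = Icc (0 ⊔ -v) (b ⊓ (b - v)) := by
    ext x
    simp only [mem_ofPred_eq, mem_Icc, sup_le_iff, le_inf_iff, neg_le_iff_add_nonneg,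
      le_sub_iff_add_le]
    tauto
  rw [hbox, Real.volume_Icc_pi]
  refine Finset.prod_congr rfl fun i _ ↦ congrArg ENNReal.ofReal ?_
  simp only [Pi.inf_apply, Pi.sup_apply, Pi.sub_apply, Pi.neg_apply, Pi.zero_apply]
  rcases le_total 0 (v i) with h | h
  · rw [abs_of_nonneg h, inf_eq_right.2 (by linarith), sup_eq_left.2 (by linarith)]
    ring
  · rw [abs_of_nonpos h, inf_eq_left.2 (by linarith), sup_eq_right.2 (by linarith)]

/-! ### Reflections and permutations of the coordinates -/

theorem volume_preimage_abs {s : Set ℝ} (hs : MeasurableSet s) :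
    volume ((fun x : ℝ ↦ |x|) ⁻¹' s) = 2 * volume (s ∩ Ioi 0) := by
  have hpos : (fun x : ℝ ↦ |x|) ⁻¹' s ∩ Ioi 0 = s ∩ Ioi 0 := by
    ext x
    simp +contextual [abs_of_pos]
  have hneg : (fun x : ℝ ↦ |x|) ⁻¹' s ∩ Iio 0 = Neg.neg ⁻¹' (s ∩ Ioi 0) := by
    ext x
    simp +contextual [abs_of_neg]
  have hdiff : ((fun x : ℝ ↦ |x|) ⁻¹' s \ Ioi 0 : Set ℝ) =ᵐ[volume]
      ((fun x ↦ |x|) ⁻¹' s ∩ Iio 0 :) := by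
    rw [sdiff_eq, compl_Ioi]
    exact ae_eq_rfl.inter Iio_ae_eq_Iic.symm
  rw [← measure_inter_add_sdiff _ measurableSet_Ioi, measure_congr hdiff, hpos, hneg,
    (Measure.measurePreserving_neg volume).measure_preimage
      (hs.inter measurableSet_Ioi).nullMeasurableSet, two_mul]

/-- The open positive orthant of `ι → ℝ`, a fundamental domain up to null sets for the
coordinate reflections. -/
def posOrthant (ι : Type*) : Set (ι → ℝ) := univ.pi fun _ ↦ Ioi 0

theorem measurableSet_posOrthant {ι : Type*} [Countable ι] : MeasurableSet (posOrthant ι) :=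
  .univ_pi fun _ ↦ measurableSet_Ioi

section

variable {ι : Type*} [Fintype ι]

theorem measurePreserving_pi_abs :
    MeasurePreserving (fun v : ι → ℝ ↦ |v|) volume
      ((2 : NNReal) ^ Fintype.card ι • volume.restrict (posOrthant ι)) := by
  have habs : Measurable (fun v : ι → ℝ ↦ |v|) :=
    measurable_pi_lambda _ fun i ↦ by simpa using by fun_prop
  refine ⟨habs, ?_⟩
  have hscale : volume.map (fun v : ι → ℝ ↦ |v|) =
      Measure.pi fun _ ↦ (2 : NNReal) • volume.restrict (Ioi (0 : ℝ)) := by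
    refine (Measure.pi_eq fun s hs ↦ ?_).symm
    have hpre : (fun v : ι → ℝ ↦ |v|) ⁻¹' univ.pi s = univ.pi fun i ↦ (|·|) ⁻¹' s i := by
      ext v; simp
    rw [Measure.map_apply habs (.univ_pi hs), hpre, volume_pi_pi]
    exact Finset.prod_congr rfl fun i _ ↦ by
      simp [volume_preimage_abs (hs i), Measure.restrict_apply (hs i)]
  rw [hscale]
  refine Measure.pi_eq fun s _ ↦ ?_
  rw [Measure.smul_apply, posOrthant, volume_pi, Measure.restrict_pi_pi, Measure.pi_pi]
  simp [Finset.prod_mul_distrib, ENNReal.smul_def]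

theorem setLIntegral_comp_pi_abs {S : Set (ι → ℝ)} (hSm : MeasurableSet S)
    (hS : (fun v : ι → ℝ ↦ |v|) ⁻¹' S = S) {F : (ι → ℝ) → ENNReal} (hF : Measurable F) :
    ∫⁻ v in S, F |v| = 2 ^ Fintype.card ι * ∫⁻ v in posOrthant ι ∩ S, F v := by
  rw [← hS, measurePreserving_pi_abs.setLIntegral_comp_preimage hSm hF, hS,
    Measure.restrict_smul, lintegral_smul_measure, Measure.restrict_restrict hSm, inter_comm]
  simp [ENNReal.smul_def]

theorem setIntegral_comp_perm {E : Type*} [NormedAddCommGroup E] [NormedSpace ℝ E]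
    {S : Set (ι → ℝ)} (σ : Equiv.Perm ι) (hS : (· ∘ σ) ⁻¹' S = S) (f : (ι → ℝ) → E) :
    ∫ v in S, f (v ∘ σ) = ∫ v in S, f v := by
  have hcomp : ⇑(MeasurableEquiv.piCongrLeft (fun _ : ι ↦ ℝ) σ.symm) = (· ∘ σ) := by
    ext v i
    obtain ⟨j, rfl⟩ := σ.symm.surjective i
    simp [MeasurableEquiv.coe_piCongrLeft]
  have hintegral := (volume_measurePreserving_piCongrLeft (fun _ : ι ↦ ℝ) σ.symm)
    |>.setIntegral_preimage_emb (MeasurableEquiv.measurableEmbedding _) f S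
  rwa [hcomp, hS] at hintegral

end

/-! ### Products of positive parts with at most one negative factor -/

theorem prod_posPart_eq_of_pairwise {ι : Type*} [DecidableEq ι] {f : ι → ℝ} (s : Finset ι)
    (hf : (s : Set ι).Pairwise fun i j ↦ 0 ≤ f i ∨ 0 ≤ f j) :
    ∏ i ∈ s, (f i)⁺ = ∏ i ∈ s, f i + ∑ i ∈ s, (f i)⁻ * ∏ j ∈ s.erase i, f j := by
  by_cases hall : ∀ i ∈ s, 0 ≤ f i
  · rw [Finset.sum_eq_zero fun i hi ↦ by rw [negPart_eq_zero.2 (hall i hi), zero_mul], add_zero]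
    exact Finset.prod_congr rfl fun i hi ↦ posPart_eq_self.2 (hall i hi)
  · push Not at hall
    obtain ⟨k, hk, hfk⟩ := hall
    have hothers : ∀ i ∈ s, i ≠ k → (f i)⁻ * ∏ j ∈ s.erase i, f j = 0 := fun i hi hik ↦ by
      rw [negPart_eq_zero.2 ((hf hi hk hik).resolve_right hfk.not_ge), zero_mul]
    rw [Finset.sum_eq_single_of_mem k hk hothers, negPart_of_nonpos hfk.le,
      Finset.prod_eq_zero hk (posPart_of_nonpos hfk.le), ← Finset.mul_prod_erase s f hk]
    ring

theorem integrableOn_of_continuous_of_isBounded {X E : Type*} [PseudoMetricSpace X] [ProperSpace X]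
    [MeasurableSpace X] [OpensMeasurableSpace X] [NormedAddCommGroup E]
    [SecondCountableTopologyEither X E] {μ : Measure X} [IsFiniteMeasureOnCompacts μ] {f : X → E}
    {s : Set X} (hf : Continuous f) (hs : Bornology.IsBounded s) : IntegrableOn f s μ :=
  (hf.continuousOn.integrableOn_compact' hs.isCompact_closure
    isClosed_closure.measurableSet).mono_set subset_closure

section

variable {ι : Type*} [Fintype ι]

theorem setIntegral_prod_posPart [DecidableEq ι] {S : Set (ι → ℝ)} (hSm : MeasurableSet S)
    (hSb : Bornology.IsBounded S) (hS : ∀ σ : Equiv.Perm ι, (· ∘ σ) ⁻¹' S = S)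
    {g : ℝ → ℝ} (hg : Continuous g)
    (hneg : ∀ v ∈ S, Pairwise fun i j ↦ 0 ≤ g (v i) ∨ 0 ≤ g (v j)) (i₀ : ι) :
    ∫ v in S, ∏ i, (g (v i))⁺ =
      ∫ v in S, (g (v i₀) + Fintype.card ι * (g (v i₀))⁻) *
        ∏ j ∈ Finset.univ.erase i₀, g (v j) := by
  let cap (i : ι) (v : ι → ℝ) : ℝ := (g (v i))⁻ * ∏ j ∈ Finset.univ.erase i, g (v j)
  have hprod : IntegrableOn (fun v : ι → ℝ ↦ ∏ i, g (v i)) S :=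
    integrableOn_of_continuous_of_isBounded (by fun_prop) hSb
  have hcap (i : ι) : IntegrableOn (cap i) S :=
    integrableOn_of_continuous_of_isBounded (by fun_prop) hSb
  have hcap_eq (i : ι) : ∫ v in S, cap i v = ∫ v in S, cap i₀ v := by
    rw [← setIntegral_comp_perm (Equiv.swap i₀ i) (hS _) (cap i₀)]
    refine setIntegral_congr_fun hSm fun v _ ↦ ?_
    have hreindex : ∏ j ∈ Finset.univ.erase i, g (v j) =
        ∏ j ∈ Finset.univ.erase i₀, g (v (Equiv.swap i₀ i j)) :=
      (Finset.prod_equiv (Equiv.swap i₀ i) (by simp [Equiv.swap_apply_eq_iff]) fun _ _ ↦ rfl).symm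
    simp [cap, hreindex]
  calc ∫ v in S, ∏ i, (g (v i))⁺
      = ∫ v in S, (∏ i, g (v i) + ∑ i, cap i v) := setIntegral_congr_fun hSm fun v hv ↦
        prod_posPart_eq_of_pairwise _ ((hneg v hv).set_pairwise _)
    _ = ∫ v in S, (∏ i, g (v i) + Fintype.card ι * cap i₀ v) := by
        rw [integral_add hprod (integrable_finsetSum _ fun i _ ↦ hcap i),
          integral_finsetSum _ fun i _ ↦ hcap i, integral_add hprod ((hcap i₀).const_mul _),
          integral_const_mul, Finset.sum_congr rfl fun i _ ↦ hcap_eq i]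
        simp
    _ = _ := by
        congr 1 with v
        rw [← Finset.mul_prod_erase _ _ (Finset.mem_univ i₀)]
        ring

/-! ### Euclidean shells -/

variable (ι) in
/-- The vectors whose Euclidean length lies in `L`. The length is spelled out because the norm of
`ι → ℝ` is the supremum norm. -/
def euclideanShell (L : Set ℝ) : Set (ι → ℝ) := {v | √(∑ i, v i ^ 2) ∈ L}

theorem mem_euclideanShell {L : Set ℝ} {v : ι → ℝ} :
    v ∈ euclideanShell ι L ↔ √(∑ i, v i ^ 2) ∈ L := Iff.rfl

theorem measurableSet_euclideanShell {L : Set ℝ} (hL : MeasurableSet L) :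
    MeasurableSet (euclideanShell ι L) :=
  measurableSet_preimage (by fun_prop) hL

theorem isBounded_euclideanShell {L : Set ℝ} (hL : BddAbove L) :
    Bornology.IsBounded (euclideanShell ι L) := by
  obtain ⟨R, hR⟩ := hL
  refine isBounded_iff_forall_norm_le.2 ⟨R, fun v hv ↦ ?_⟩
  have hvR : √(∑ i, v i ^ 2) ≤ R := hR hv
  refine (pi_norm_le_iff_of_nonneg ((sqrt_nonneg _).trans hvR)).2 fun i ↦ ?_
  calc ‖v i‖ = √(v i ^ 2) := (sqrt_sq_eq_abs _).symm
    _ ≤ √(∑ i, v i ^ 2) := by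
      gcongr
      exact Finset.single_le_sum (f := fun i ↦ v i ^ 2) (fun _ _ ↦ sq_nonneg _) (Finset.mem_univ i)
    _ ≤ R := hvR

theorem preimage_abs_euclideanShell (L : Set ℝ) :
    (fun v : ι → ℝ ↦ |v|) ⁻¹' euclideanShell ι L = euclideanShell ι L := by
  ext v
  simp [mem_euclideanShell]

theorem preimage_comp_perm_posOrthant_inter_euclideanShell (σ : Equiv.Perm ι) (L : Set ℝ) :
    (· ∘ σ) ⁻¹' (posOrthant ι ∩ euclideanShell ι L) = posOrthant ι ∩ euclideanShell ι L := by
  ext v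
  have hpos : v ∘ σ ∈ posOrthant ι ↔ v ∈ posOrthant ι := by
    simpa [posOrthant] using σ.forall_congr_right (q := fun i ↦ 0 < v i)
  have hlength : ∑ i, (v ∘ σ) i ^ 2 = ∑ i, v i ^ 2 := Equiv.sum_comp σ fun i ↦ v i ^ 2
  simp only [mem_preimage, mem_inter_iff, hpos, mem_euclideanShell, hlength]

theorem volume_prod_Icc_dist_mem_eq_lintegral (b : ι → ℝ) {L : Set ℝ} (hL : MeasurableSet L) :
    volume {p : EuclideanSpace ℝ ι × EuclideanSpace ℝ ι |
        p.1.ofLp ∈ Icc 0 b ∧ p.2.ofLp ∈ Icc 0 b ∧ dist p.1 p.2 ∈ L} =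
      ∫⁻ v in euclideanShell ι L, ∏ i, ENNReal.ofReal (b i - |v i|) := by
  have hofLp := PiLp.volume_preserving_ofLp ι
  have hshell : (WithLp.ofLp : EuclideanSpace ℝ ι → ι → ℝ) ⁻¹' euclideanShell ι L =
      norm ⁻¹' L := by
    ext v
    simp [mem_euclideanShell, EuclideanSpace.norm_eq]
  have hoverlap (v : EuclideanSpace ℝ ι) :
      volume {x : EuclideanSpace ℝ ι | x.ofLp ∈ Icc 0 b ∧ (x + v).ofLp ∈ Icc 0 b} =
        ∏ i, ENNReal.ofReal (b i - |v i|) := by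
    rw [← volume_Icc_inter_add b v.ofLp]
    exact hofLp.measure_preimage <| .inter measurableSet_Icc.nullMeasurableSet
      (measurable_add_const v.ofLp measurableSet_Icc).nullMeasurableSet
  rw [← hofLp.setLIntegral_comp_preimage (measurableSet_euclideanShell hL) (by fun_prop), hshell]
  simp only [← hoverlap, dist_eq_norm_neg_add]
  exact measure_prod_neg_add_mem volume (hofLp.measurable measurableSet_Icc) (measurable_norm hL)

theorem volume_prod_Icc_dist_mem_eq_integral (b : ι → ℝ) {L : Set ℝ} (hL : MeasurableSet L)
    (hLb : BddAbove L) :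
    volume {p : EuclideanSpace ℝ ι × EuclideanSpace ℝ ι |
        p.1.ofLp ∈ Icc 0 b ∧ p.2.ofLp ∈ Icc 0 b ∧ dist p.1 p.2 ∈ L} =
      ENNReal.ofReal (2 ^ Fintype.card ι *
        ∫ v in posOrthant ι ∩ euclideanShell ι L, ∏ i, (b i - v i)⁺) := by
  have hint : IntegrableOn (fun v : ι → ℝ ↦ ∏ i, (b i - v i)⁺)
      (posOrthant ι ∩ euclideanShell ι L) :=
    integrableOn_of_continuous_of_isBounded (by fun_prop)
      ((isBounded_euclideanShell hLb).subset inter_subset_right)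
  have hnonneg (v : ι → ℝ) : 0 ≤ ∏ i, (b i - v i)⁺ :=
    Finset.prod_nonneg fun i _ ↦ posPart_nonneg _
  rw [volume_prod_Icc_dist_mem_eq_lintegral b hL, ENNReal.ofReal_mul (by positivity),
    ofReal_integral_eq_lintegral_ofReal hint (.of_forall hnonneg)]
  have hofReal (v : ι → ℝ) : ENNReal.ofReal (∏ i, (b i - v i)⁺) =
      ∏ i, ENNReal.ofReal (b i - v i) := by
    rw [ENNReal.ofReal_prod_of_nonneg fun i _ ↦ posPart_nonneg _]
    simp [posPart_def, ENNReal.ofReal_max]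
  simp only [hofReal, ENNReal.ofReal_pow zero_le_two, ENNReal.ofReal_ofNat]
  exact setLIntegral_comp_pi_abs (measurableSet_euclideanShell hL) (preimage_abs_euclideanShell L)
    (F := fun v ↦ ∏ i, ENNReal.ofReal (b i - v i)) (by fun_prop)

theorem pairwise_le_of_mem_euclideanShell {a : ℝ} (ha : 0 ≤ a) {L : Set ℝ} (hL : L ⊆ Iic (√2 * a))
    {v : ι → ℝ} (hv : v ∈ euclideanShell ι L) : Pairwise fun i j ↦ v i ≤ a ∨ v j ≤ a := by
  intro i j hij
  by_contra! hgt
  have hsum : ∑ k, v k ^ 2 ≤ 2 * a ^ 2 := by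
    rw [← sq_sqrt (zero_le_two (α := ℝ)), ← mul_pow]
    exact (sqrt_le_left (by positivity)).1 (hL hv)
  have hpair : v i ^ 2 + v j ^ 2 ≤ ∑ k, v k ^ 2 :=
    Finset.add_le_sum (fun _ _ ↦ sq_nonneg _) (Finset.mem_univ i) (Finset.mem_univ j) hij
  have hi : a ^ 2 < v i ^ 2 := by gcongr; exact hgt.1
  have hj : a ^ 2 < v j ^ 2 := by gcongr; exact hgt.2
  linarith

theorem setIntegral_euclideanShell_prod_posPart [DecidableEq ι] {a : ℝ} (ha : 0 ≤ a) {L : Set ℝ}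
    (hLm : MeasurableSet L) (hL : L ⊆ Iic (√2 * a)) (i₀ : ι) :
    ∫ v in posOrthant ι ∩ euclideanShell ι L, ∏ i, (a - v i)⁺ =
      ∫ v in posOrthant ι ∩ euclideanShell ι L, (a - v i₀ + Fintype.card ι * (a - v i₀)⁻) *
        ∏ j ∈ Finset.univ.erase i₀, (a - v j) := by
  refine setIntegral_prod_posPart
    (measurableSet_posOrthant.inter (measurableSet_euclideanShell hLm))
    ((isBounded_euclideanShell (bddAbove_Iic.mono hL)).subset inter_subset_right)
    (preimage_comp_perm_posOrthant_inter_euclideanShell · L) (g := fun x ↦ a - x) (by fun_prop)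
    (fun v hv i j hij ↦ ?_) i₀
  simpa only [sub_nonneg] using pairwise_le_of_mem_euclideanShell ha hL hv.2 hij

end

/-! ### Spherical coordinates in the positive octant -/

theorem injOn_polarCoord_symm_quadrant :
    InjOn polarCoord.symm (Ioi 0 ×ˢ Ioo 0 (π / 2)) :=
  polarCoord.symm.injOn.mono <| prod_mono Subset.rfl <|
    Ioo_subset_Ioo (by linarith [pi_pos]) (by linarith [pi_pos])

theorem exists_polar_of_pos {x y : ℝ} (hx : 0 < x) (hy : 0 < y) :
    ∃ r ∈ Ioi (0 : ℝ), ∃ t ∈ Ioo 0 (π / 2), r * cos t = x ∧ r * sin t = y := by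
  refine ⟨√(x ^ 2 + y ^ 2), mem_Ioi.2 (by positivity), arctan (y / x),
    ⟨arctan_pos.2 (by positivity), arctan_lt_pi_div_two _⟩, ?_⟩
  have hsqrt : √(1 + (y / x) ^ 2) = √(x ^ 2 + y ^ 2) / x := by
    rw [← sqrt_sq hx.le, ← sqrt_div' _ (by positivity), sqrt_sq hx.le]
    congr 1
    field_simp
  rw [cos_arctan, sin_arctan, hsqrt]
  constructor <;> field_simp

/-- Spherical coordinates with radius `w 0`, polar angle `w 1` measured from the zeroth axis, and
azimuth `w 2`. -/
noncomputable def sphericalMap (w : Fin 3 → ℝ) : Fin 3 → ℝ :=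
  ![w 0 * cos (w 1), w 0 * sin (w 1) * cos (w 2), w 0 * sin (w 1) * sin (w 2)]

/-- The Jacobian matrix of `sphericalMap`. -/
noncomputable def sphericalJacobian (w : Fin 3 → ℝ) : Matrix (Fin 3) (Fin 3) ℝ :=
  !![cos (w 1), -(w 0 * sin (w 1)), 0;
    sin (w 1) * cos (w 2), w 0 * cos (w 1) * cos (w 2), -(w 0 * sin (w 1) * sin (w 2));
    sin (w 1) * sin (w 2), w 0 * cos (w 1) * sin (w 2), w 0 * sin (w 1) * cos (w 2)]

theorem det_sphericalJacobian (w : Fin 3 → ℝ) :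
    (sphericalJacobian w).det = w 0 ^ 2 * sin (w 1) := by
  simp only [sphericalJacobian, Matrix.det_fin_three, Matrix.of_apply, Matrix.cons_val]
  linear_combination w 0 ^ 2 * sin (w 1) * ((sin (w 1) ^ 2 + cos (w 1) ^ 2) *
    sin_sq_add_cos_sq (w 2) + sin_sq_add_cos_sq (w 1))

theorem hasFDerivAt_sphericalMap (w : Fin 3 → ℝ) :
    HasFDerivAt sphericalMap (Matrix.toLin' (sphericalJacobian w)).toContinuousLinearMap w := by
  have hl := hasFDerivAt_apply (𝕜 := ℝ) 0 w
  have hθ := hasFDerivAt_apply (𝕜 := ℝ) 1 w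
  have hφ := hasFDerivAt_apply (𝕜 := ℝ) 2 w
  refine hasFDerivAt_pi'' fun i ↦ ?_
  fin_cases i
  on_goal 1 => refine (hl.mul hθ.cos).congr_fderiv ?_
  on_goal 2 => refine ((hl.mul hθ.sin).mul hφ.cos).congr_fderiv ?_
  on_goal 3 => refine ((hl.mul hθ.sin).mul hφ.sin).congr_fderiv ?_
  all_goals
    ext v
    simp only [sphericalJacobian, Fin.zero_eta, Fin.mk_one, Fin.reduceFinMk, Pi.mul_apply,
      add_apply, smul_apply, smul_eq_mul, ContinuousLinearMap.proj_apply,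
      ContinuousLinearMap.comp_apply, LinearMap.coe_toContinuousLinearMap', Matrix.toLin'_apply,
      Matrix.cons_mulVec, dotProduct, Fin.sum_univ_three, Matrix.cons_val]
    ring

@[fun_prop]
theorem continuous_sphericalMap : Continuous sphericalMap :=
  continuous_iff_continuousAt.2 fun w ↦ (hasFDerivAt_sphericalMap w).continuousAt

/-- The spherical coordinates, with radius in `L`, of vectors of the open positive octant. -/
def sphericalBox (L : Set ℝ) : Set (Fin 3 → ℝ) := univ.pi ![L, Ioo 0 (π / 2), Ioo 0 (π / 2)]

theorem mem_sphericalBox {L : Set ℝ} {w : Fin 3 → ℝ} :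
    w ∈ sphericalBox L ↔ w 0 ∈ L ∧ w 1 ∈ Ioo 0 (π / 2) ∧ w 2 ∈ Ioo 0 (π / 2) := by
  simp [sphericalBox, Fin.forall_fin_succ]

theorem sphericalBox_mono {L M : Set ℝ} (h : L ⊆ M) : sphericalBox L ⊆ sphericalBox M :=
  fun _ hw ↦ mem_sphericalBox.2 ((mem_sphericalBox.1 hw).imp_left (@h _))

theorem measurableSet_sphericalBox {L : Set ℝ} (hL : MeasurableSet L) :
    MeasurableSet (sphericalBox L) :=
  .univ_pi fun i ↦ by fin_cases i <;> simp [hL]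

theorem isBounded_sphericalBox {L : Set ℝ} (hL : Bornology.IsBounded L) :
    Bornology.IsBounded (sphericalBox L) :=
  .pi fun i ↦ by fin_cases i <;> simp [hL, Metric.isBounded_Ioo]

theorem sin_pos_of_mem_Ioo_pi_div_two {t : ℝ} (ht : t ∈ Ioo 0 (π / 2)) : 0 < sin t :=
  sin_pos_of_mem_Ioo ⟨ht.1, by linarith [ht.2, pi_pos]⟩

theorem cos_pos_of_mem_Ioo_pi_div_two {t : ℝ} (ht : t ∈ Ioo 0 (π / 2)) : 0 < cos t :=
  cos_pos_of_mem_Ioo ⟨by linarith [ht.1, pi_pos], ht.2⟩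

theorem injOn_sphericalMap : InjOn sphericalMap (sphericalBox (Ioi 0)) := by
  intro w hw w' hw' h
  obtain ⟨hl, hθ, hφ⟩ := mem_sphericalBox.1 hw
  obtain ⟨hl', hθ', hφ'⟩ := mem_sphericalBox.1 hw'
  have h0 : w 0 * cos (w 1) = w' 0 * cos (w' 1) := congrFun h 0
  have h12 := injOn_polarCoord_symm_quadrant (x₁ := (w 0 * sin (w 1), w 2))
    (x₂ := (w' 0 * sin (w' 1), w' 2))
    ⟨mul_pos hl (sin_pos_of_mem_Ioo_pi_div_two hθ), hφ⟩
    ⟨mul_pos hl' (sin_pos_of_mem_Ioo_pi_div_two hθ'), hφ'⟩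
    (Prod.ext (congrFun h 1) (congrFun h 2))
  have h01 := injOn_polarCoord_symm_quadrant (x₁ := (w 0, w 1)) (x₂ := (w' 0, w' 1))
    ⟨hl, hθ⟩ ⟨hl', hθ'⟩ (Prod.ext h0 (congrArg Prod.fst h12))
  ext i
  fin_cases i
  exacts [congrArg Prod.fst h01, congrArg Prod.snd h01, congrArg Prod.snd h12]

theorem sum_sq_sphericalMap (w : Fin 3 → ℝ) : ∑ i, sphericalMap w i ^ 2 = w 0 ^ 2 := by
  simp only [sphericalMap, Fin.sum_univ_three, Matrix.cons_val]
  linear_combination w 0 ^ 2 * sin (w 1) ^ 2 * sin_sq_add_cos_sq (w 2) +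
    w 0 ^ 2 * sin_sq_add_cos_sq (w 1)

theorem sphericalMap_mem_posOrthant {w : Fin 3 → ℝ} (hw : w ∈ sphericalBox (Ioi 0)) :
    sphericalMap w ∈ posOrthant (Fin 3) := by
  obtain ⟨hl, hθ, hφ⟩ := mem_sphericalBox.1 hw
  have hs := mul_pos hl (sin_pos_of_mem_Ioo_pi_div_two hθ)
  intro i _
  fin_cases i
  exacts [mul_pos hl (cos_pos_of_mem_Ioo_pi_div_two hθ),
    mul_pos hs (cos_pos_of_mem_Ioo_pi_div_two hφ), mul_pos hs (sin_pos_of_mem_Ioo_pi_div_two hφ)]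

theorem exists_sphericalMap_eq {v : Fin 3 → ℝ} (hv : v ∈ posOrthant (Fin 3)) :
    ∃ w ∈ sphericalBox (Ioi 0), sphericalMap w = v := by
  have hpos : ∀ i, 0 < v i := fun i ↦ hv i (mem_univ i)
  obtain ⟨s, hs, φ, hφ, h1, h2⟩ := exists_polar_of_pos (hpos 1) (hpos 2)
  obtain ⟨l, hl, θ, hθ, h0, rfl⟩ := exists_polar_of_pos (hpos 0) hs
  refine ⟨![l, θ, φ], mem_sphericalBox.2 ⟨hl, hθ, hφ⟩, ?_⟩
  ext i
  fin_cases i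
  exacts [h0, h1, h2]

theorem image_sphericalMap {L : Set ℝ} (hL : L ⊆ Ioi 0) :
    sphericalMap '' sphericalBox L = posOrthant (Fin 3) ∩ euclideanShell (Fin 3) L := by
  have hradius {w : Fin 3 → ℝ} (hw : w ∈ sphericalBox (Ioi 0)) :
      √(∑ i, sphericalMap w i ^ 2) = w 0 := by
    rw [sum_sq_sphericalMap, sqrt_sq (mem_sphericalBox.1 hw).1.le]
  refine Subset.antisymm ?_ ?_
  · rintro _ ⟨w, hw, rfl⟩
    have hw' := sphericalBox_mono hL hw
    refine ⟨sphericalMap_mem_posOrthant hw', ?_⟩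
    rw [euclideanShell, mem_ofPred_eq, hradius hw']
    exact (mem_sphericalBox.1 hw).1
  · rintro v ⟨hv, hvL⟩
    obtain ⟨w, hw, rfl⟩ := exists_sphericalMap_eq hv
    rw [euclideanShell, mem_ofPred_eq, hradius hw] at hvL
    exact ⟨w, mem_sphericalBox.2 ⟨hvL, (mem_sphericalBox.1 hw).2⟩, rfl⟩

theorem setIntegral_posOrthant_inter_euclideanShell {E : Type*} [NormedAddCommGroup E]
    [NormedSpace ℝ E] {L : Set ℝ} (hLm : MeasurableSet L) (hL : L ⊆ Ioi 0) (f : (Fin 3 → ℝ) → E) :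
    ∫ v in posOrthant (Fin 3) ∩ euclideanShell (Fin 3) L, f v =
      ∫ w in sphericalBox L, (w 0 ^ 2 * sin (w 1)) • f (sphericalMap w) := by
  rw [← image_sphericalMap hL, integral_image_eq_integral_abs_det_fderiv_smul volume
    (measurableSet_sphericalBox hLm) (fun w _ ↦ (hasFDerivAt_sphericalMap w).hasFDerivWithinAt)
    (injOn_sphericalMap.mono (sphericalBox_mono hL))]
  refine setIntegral_congr_fun (measurableSet_sphericalBox hLm) fun w hw ↦ ?_
  obtain ⟨-, hθ, -⟩ := mem_sphericalBox.1 hw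
  have hsin := (sin_pos_of_mem_Ioo_pi_div_two hθ).le
  simp only [LinearMap.det_toContinuousLinearMap, LinearMap.det_toLin', det_sphericalJacobian]
  rw [abs_of_nonneg (by positivity)]

section

variable {n : ℕ} {X : Fin (n + 1) → Type*} [∀ i, MeasurableSpace (X i)]
  {μ : ∀ i, Measure (X i)} [∀ i, SigmaFinite (μ i)] {E : Type*} [NormedAddCommGroup E]

theorem coe_piFinSuccAbove_zero_symm :
    ⇑(MeasurableEquiv.piFinSuccAbove X 0).symm = fun p ↦ Fin.cons p.1 p.2 := by
  ext p : 1
  exact Fin.insertNth_zero p.1 p.2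

theorem measurePreserving_fin_cons : MeasurePreserving
    (fun p : X 0 × (∀ i : Fin n, X i.succ) ↦ (Fin.cons p.1 p.2 : ∀ i, X i))
    ((μ 0).prod (Measure.pi fun i ↦ μ i.succ)) (Measure.pi μ) := by
  have h := (measurePreserving_piFinSuccAbove μ 0).symm
  rwa [coe_piFinSuccAbove_zero_symm] at h

theorem measurableEmbedding_fin_cons : MeasurableEmbedding
    (fun p : X 0 × (∀ i : Fin n, X i.succ) ↦ (Fin.cons p.1 p.2 : ∀ i, X i)) := by
  have h := (MeasurableEquiv.piFinSuccAbove X 0).symm.measurableEmbedding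
  rwa [coe_piFinSuccAbove_zero_symm] at h

theorem ae_integrable_fin_cons {f : (∀ i, X i) → E} (hf : Integrable f (Measure.pi μ)) :
    ∀ᵐ x ∂μ 0, Integrable (fun v ↦ f (Fin.cons x v)) (Measure.pi fun i ↦ μ i.succ) :=
  (measurePreserving_fin_cons.integrable_comp_of_integrable hf).prod_right_ae

theorem integral_pi_fin_succ [NormedSpace ℝ E] {f : (∀ i, X i) → E}
    (hf : Integrable f (Measure.pi μ)) :
    ∫ v, f v ∂Measure.pi μ =
      ∫ x, ∫ v, f (Fin.cons x v) ∂Measure.pi (fun i ↦ μ i.succ) ∂μ 0 := by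
  rw [← measurePreserving_fin_cons.integral_comp measurableEmbedding_fin_cons]
  exact integral_prod _ (measurePreserving_fin_cons.integrable_comp_of_integrable hf)

end

theorem setIntegral_pi_fin_three {E : Type*} [NormedAddCommGroup E] [CompleteSpace E]
    [NormedSpace ℝ E] {s : Fin 3 → Set ℝ} {f : (Fin 3 → ℝ) → E}
    (hf : IntegrableOn f (univ.pi s)) :
    ∫ v in univ.pi s, f v = ∫ x in s 0, ∫ y in s 1, ∫ z in s 2, f ![x, y, z] := by
  rw [IntegrableOn, volume_pi, Measure.restrict_pi_pi] at hf
  rw [volume_pi, Measure.restrict_pi_pi, integral_pi_fin_succ hf]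
  refine integral_congr_ae <| (ae_integrable_fin_cons hf).mono fun x hx ↦ ?_
  simp only [integral_pi_fin_succ hx]
  refine integral_congr_ae <| (ae_integrable_fin_cons hx).mono fun y hy ↦ ?_
  simp only [integral_pi_fin_succ hy, Measure.pi_of_empty _ ![], integral_dirac]
  rfl

theorem setIntegral_posOrthant_inter_euclideanShell_Icc {E : Type*} [NormedAddCommGroup E]
    [CompleteSpace E] [NormedSpace ℝ E] {l₁ l₂ : ℝ} (h₁ : 0 < l₁) (h₁₂ : l₁ ≤ l₂)
    {f : (Fin 3 → ℝ) → E} (hf : Continuous f) :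
    ∫ v in posOrthant (Fin 3) ∩ euclideanShell (Fin 3) (Icc l₁ l₂), f v =
      ∫ l in l₁..l₂, ∫ θ in 0..π / 2, ∫ φ in 0..π / 2,
        (l ^ 2 * sin θ) • f (sphericalMap ![l, θ, φ]) := by
  have hint : IntegrableOn (fun w : Fin 3 → ℝ ↦ (w 0 ^ 2 * sin (w 1)) • f (sphericalMap w))
      (sphericalBox (Icc l₁ l₂)) :=
    integrableOn_of_continuous_of_isBounded (by fun_prop)
      (isBounded_sphericalBox (Metric.isBounded_Icc _ _))
  rw [setIntegral_posOrthant_inter_euclideanShell measurableSet_Icc fun _ hl ↦ h₁.trans_le hl.1,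
    sphericalBox, setIntegral_pi_fin_three hint]
  simp [intervalIntegral.integral_of_le, h₁₂, pi_div_two_pos.le, integral_Icc_eq_integral_Ioc,
    integral_Ioc_eq_integral_Ioo]

/-! ### The angular integrals -/

/-- The azimuthal integral of `(a - y) (a - z)` over the circle of radius `s` in the `yz`-plane,
restricted to the positive quadrant. -/
noncomputable def transverseIntegral (a s : ℝ) : ℝ :=
  ∫ φ in 0..π / 2, (a - s * cos φ) * (a - s * sin φ)

theorem transverseIntegral_eq (a s : ℝ) :
    transverseIntegral a s = a ^ 2 * π / 2 - 2 * a * s + s ^ 2 / 2 := by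
  have hderiv (φ : ℝ) : HasDerivAt
      (fun φ ↦ a ^ 2 * φ - a * s * sin φ + a * s * cos φ + s ^ 2 * sin φ ^ 2 / 2)
      ((a - s * cos φ) * (a - s * sin φ)) φ := by
    refine ((((hasDerivAt_id' φ).const_mul (a ^ 2)).sub ((hasDerivAt_sin φ).const_mul (a * s))).add
      ((hasDerivAt_cos φ).const_mul (a * s))).add
      ((((hasDerivAt_sin φ).pow 2).const_mul (s ^ 2)).div_const 2) |>.congr_deriv ?_
    ring
  rw [transverseIntegral, intervalIntegral.integral_eq_sub_of_hasDerivAt (fun φ _ ↦ hderiv φ)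
    (Continuous.intervalIntegrable (by fun_prop) _ _)]
  simp only [sin_pi_div_two, cos_pi_div_two, sin_zero, cos_zero]
  ring

@[fun_prop]
theorem continuous_transverseIntegral (a : ℝ) : Continuous (transverseIntegral a) := by
  simp only [funext (transverseIntegral_eq a)]
  fun_prop

/-- A primitive in the polar angle `θ` of the transverse integral at distance `l * sin θ` from the
axis, weighted by `l * sin θ * (a - l * cos θ)`. -/
noncomputable def polarPrimitive (a l θ : ℝ) : ℝ :=
  -a ^ 3 * π / 2 * (l * cos θ) - a ^ 2 * l ^ 2 * θ + a ^ 2 * (l * sin θ) * (l * cos θ)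
    - a * l ^ 2 * (l * cos θ) / 2 + a * (l * cos θ) ^ 3 / 6 - a ^ 2 * π / 4 * (l * sin θ) ^ 2
    + 2 * a * (l * sin θ) ^ 3 / 3 - (l * sin θ) ^ 4 / 8

theorem hasDerivAt_polarPrimitive (a l θ : ℝ) :
    HasDerivAt (polarPrimitive a l)
      (l * sin θ * ((a - l * cos θ) * transverseIntegral a (l * sin θ))) θ := by
  rw [transverseIntegral_eq]
  have hS := (hasDerivAt_sin θ).const_mul l
  have hC := (hasDerivAt_cos θ).const_mul l
  refine (((((((hC.const_mul (-a ^ 3 * π / 2)).sub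
    ((hasDerivAt_id' θ).const_mul (a ^ 2 * l ^ 2))).add ((hS.const_mul (a ^ 2)).mul hC)).sub
    ((hC.const_mul (a * l ^ 2)).div_const 2)).add (((hC.pow 3).const_mul a).div_const 6)).sub
    ((hS.pow 2).const_mul (a ^ 2 * π / 4))).add (((hS.pow 3).const_mul (2 * a)).div_const 3)).sub
    ((hS.pow 4).div_const 8) |>.congr_deriv ?_
  simp only [Nat.cast_ofNat, Nat.add_one_sub_one, pow_one]
  linear_combination (a ^ 2 * l ^ 2 - a * l ^ 3 * sin θ / 2) * sin_sq_add_cos_sq θ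

theorem integral_sin_mul_sub_cos_mul_transverseIntegral (a l θ₁ θ₂ : ℝ) :
    ∫ θ in θ₁..θ₂, l * sin θ * ((a - l * cos θ) * transverseIntegral a (l * sin θ)) =
      polarPrimitive a l θ₂ - polarPrimitive a l θ₁ :=
  intervalIntegral.integral_eq_sub_of_hasDerivAt (fun θ _ ↦ hasDerivAt_polarPrimitive a l θ)
    (Continuous.intervalIntegrable (by fun_prop) _ _)

theorem mul_sin_arccos_div {a s : ℝ} (hs : 0 < s) :
    s * sin (arccos (a / s)) = √(s ^ 2 - a ^ 2) := by
  have hdiv : 1 - (a / s) ^ 2 = (s ^ 2 - a ^ 2) / s ^ 2 := by field_simp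
  rw [sin_arccos, hdiv, sqrt_div' _ (by positivity), sqrt_sq hs.le, mul_div_cancel₀ _ hs.ne']

theorem mul_cos_arccos_div {a s : ℝ} (hs : 0 < s) (has : |a| ≤ s) :
    s * cos (arccos (a / s)) = a := by
  obtain ⟨h₁, h₂⟩ := abs_le.1 has
  rw [cos_arccos ((le_div_iff₀ hs).2 (by linarith)) ((div_le_one hs).2 h₂),
    mul_div_cancel₀ _ hs.ne']

theorem le_mul_cos_of_le_arccos_div {a s θ : ℝ} (hs : 0 < s) (has : |a| ≤ s) (h₀ : 0 ≤ θ)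
    (hθ : θ ≤ arccos (a / s)) : a ≤ s * cos θ := by
  rw [← mul_cos_arccos_div hs has]
  gcongr
  exact cos_le_cos_of_nonneg_of_le_pi h₀ (arccos_le_pi _) hθ

theorem mul_cos_le_of_arccos_div_le {a s θ : ℝ} (hs : 0 < s) (has : |a| ≤ s)
    (hθ : arccos (a / s) ≤ θ) (hπ : θ ≤ π) : s * cos θ ≤ a := by
  rw [← mul_cos_arccos_div hs has]
  gcongr
  exact cos_le_cos_of_nonneg_of_le_pi (arccos_nonneg _) hπ hθ

theorem integral_sin_mul_negPart_mul_transverseIntegral {a l : ℝ} (ha : 0 < a) (hl : a ≤ l) :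
    ∫ θ in 0..π / 2, l * sin θ * ((a - l * cos θ)⁻ * transverseIntegral a (l * sin θ)) =
      -(polarPrimitive a l (arccos (a / l)) - polarPrimitive a l 0) := by
  have hl0 : 0 < l := ha.trans_le hl
  have hal : |a| ≤ l := (abs_of_pos ha).trans_le hl
  have hint (θ₁ θ₂ : ℝ) : IntervalIntegrable
      (fun θ ↦ l * sin θ * ((a - l * cos θ)⁻ * transverseIntegral a (l * sin θ)))
      volume θ₁ θ₂ := Continuous.intervalIntegrable (by fun_prop) _ _
  have hβ : arccos (a / l) ≤ π / 2 := arccos_le_pi_div_two.2 (by positivity)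
  have hinside : ∀ θ ∈ uIcc 0 (arccos (a / l)), (a - l * cos θ)⁻ = -(a - l * cos θ) := by
    intro θ hθ
    rw [uIcc_of_le (arccos_nonneg _)] at hθ
    exact negPart_of_nonpos (sub_nonpos.2 (le_mul_cos_of_le_arccos_div hl0 hal hθ.1 hθ.2))
  have houtside : ∀ θ ∈ uIcc (arccos (a / l)) (π / 2), (a - l * cos θ)⁻ = 0 := by
    intro θ hθ
    rw [uIcc_of_le hβ] at hθ
    exact negPart_eq_zero.2 (sub_nonneg.2
      (mul_cos_le_of_arccos_div_le hl0 hal hθ.1 (by linarith [hθ.2, pi_pos])))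
  have hcap : ∫ θ in 0..arccos (a / l),
      l * sin θ * ((a - l * cos θ)⁻ * transverseIntegral a (l * sin θ)) =
        -(polarPrimitive a l (arccos (a / l)) - polarPrimitive a l 0) := by
    rw [← integral_sin_mul_sub_cos_mul_transverseIntegral, ← intervalIntegral.integral_neg]
    refine intervalIntegral.integral_congr fun θ hθ ↦ ?_
    simp only [hinside θ hθ]
    ring
  have hrest : ∫ θ in arccos (a / l)..π / 2,
      l * sin θ * ((a - l * cos θ)⁻ * transverseIntegral a (l * sin θ)) = 0 :=
    intervalIntegral.integral_zero_ae (.of_forall fun θ hθ ↦ by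
      rw [houtside θ (uIoc_subset_uIcc hθ), zero_mul, mul_zero])
  rw [← intervalIntegral.integral_add_adjacent_intervals (hint 0 (arccos (a / l))) (hint _ _),
    hcap, hrest, add_zero]

theorem polarPrimitive_sub_eq_P₂ {a l : ℝ} (ha : 0 < a) (hl : a ≤ l) :
    8 * l * (polarPrimitive a l (π / 2) - polarPrimitive a l 0
      - 3 * (polarPrimitive a l (arccos (a / l)) - polarPrimitive a l 0)) = a ^ 6 * P₂ a l := by
  have hl0 : 0 < l := ha.trans_le hl
  have hsq : √(l ^ 2 - a ^ 2) ^ 2 = l ^ 2 - a ^ 2 := sq_sqrt (by nlinarith)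
  have hcube : √(l ^ 2 - a ^ 2) ^ 3 = √(l ^ 2 - a ^ 2) * (l ^ 2 - a ^ 2) := by rw [pow_succ', hsq]
  have hfour : √(l ^ 2 - a ^ 2) ^ 4 = (l ^ 2 - a ^ 2) ^ 2 := by
    linear_combination (√(l ^ 2 - a ^ 2) ^ 2 + l ^ 2 - a ^ 2) * hsq
  simp only [polarPrimitive, P₂, mul_sin_arccos_div hl0,
    mul_cos_arccos_div hl0 ((abs_of_pos ha).trans_le hl), cos_pi_div_two, sin_pi_div_two,
    cos_zero, sin_zero, hsq, hcube, hfour]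
  field_simp
  ring

theorem integral_spherical_eq_P₂ {a l : ℝ} (ha : 0 < a) (hl : a ≤ l) :
    8 * ∫ θ in 0..π / 2, ∫ φ in 0..π / 2, l ^ 2 * sin θ *
      ((a - l * cos θ + 3 * (a - l * cos θ)⁻) *
        ((a - l * sin θ * cos φ) * (a - l * sin θ * sin φ))) = a ^ 6 * P₂ a l := by
  have hφ (θ : ℝ) : ∫ φ in 0..π / 2, l ^ 2 * sin θ *
      ((a - l * cos θ + 3 * (a - l * cos θ)⁻) *
        ((a - l * sin θ * cos φ) * (a - l * sin θ * sin φ))) =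
      l * (l * sin θ * ((a - l * cos θ) * transverseIntegral a (l * sin θ)) +
        3 * (l * sin θ * ((a - l * cos θ)⁻ * transverseIntegral a (l * sin θ)))) := by
    rw [intervalIntegral.integral_const_mul, intervalIntegral.integral_const_mul,
      ← transverseIntegral]
    ring
  simp only [hφ]
  rw [intervalIntegral.integral_const_mul, intervalIntegral.integral_add
    (Continuous.intervalIntegrable (by fun_prop) _ _)
    (Continuous.intervalIntegrable (by fun_prop) _ _), intervalIntegral.integral_const_mul,
    integral_sin_mul_sub_cos_mul_transverseIntegral,
    integral_sin_mul_negPart_mul_transverseIntegral ha hl, ← polarPrimitive_sub_eq_P₂ ha hl]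
  ring

theorem mem_cube_iff {a : ℝ} {x : EuclideanSpace ℝ (Fin 3)} :
    x ∈ cube a ↔ x.ofLp ∈ Icc 0 fun _ ↦ a := by
  simp [cube, Pi.le_def, forall_and]

theorem eight_mul_setIntegral_prod_posPart_eq {a l₁ l₂ : ℝ} (ha : 0 < a) (h₁ : a ≤ l₁)
    (h₁₂ : l₁ ≤ l₂) (h₂ : l₂ ≤ √2 * a) :
    8 * ∫ v in posOrthant (Fin 3) ∩ euclideanShell (Fin 3) (Icc l₁ l₂), ∏ i, (a - v i)⁺ =
      a ^ 6 * ∫ l in l₁..l₂, P₂ a l := by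
  have hrange : Icc l₁ l₂ ⊆ Iic (√2 * a) := fun l hl ↦ hl.2.trans h₂
  have herase : Finset.univ.erase (0 : Fin 3) = {1, 2} := rfl
  calc 8 * ∫ v in posOrthant (Fin 3) ∩ euclideanShell (Fin 3) (Icc l₁ l₂), ∏ i, (a - v i)⁺
      = 8 * ∫ v in posOrthant (Fin 3) ∩ euclideanShell (Fin 3) (Icc l₁ l₂),
          (a - v 0 + 3 * (a - v 0)⁻) * ((a - v 1) * (a - v 2)) := by
        rw [setIntegral_euclideanShell_prod_posPart ha.le measurableSet_Icc hrange 0]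
        simp [herase]
    _ = ∫ l in l₁..l₂, 8 * ∫ θ in 0..π / 2, ∫ φ in 0..π / 2, l ^ 2 * sin θ *
          ((a - l * cos θ + 3 * (a - l * cos θ)⁻) *
            ((a - l * sin θ * cos φ) * (a - l * sin θ * sin φ))) := by
        rw [setIntegral_posOrthant_inter_euclideanShell_Icc (ha.trans_le h₁) h₁₂ (by fun_prop),
          intervalIntegral.integral_const_mul]
        rfl
    _ = ∫ l in l₁..l₂, a ^ 6 * P₂ a l := intervalIntegral.integral_congr fun l hl ↦ by
        rw [uIcc_of_le h₁₂] at hl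
        exact integral_spherical_eq_P₂ ha (h₁.trans hl.1)
    _ = a ^ 6 * ∫ l in l₁..l₂, P₂ a l := intervalIntegral.integral_const_mul _ _

theorem density_on_second_range (a : ℝ) (ha : 0 < a) (l₁ l₂ : ℝ)
    (h0 : a ≤ l₁) (h12 : l₁ ≤ l₂) (h2a : l₂ ≤ Real.sqrt 2 * a) :
    volume {p : EuclideanSpace ℝ (Fin 3) × EuclideanSpace ℝ (Fin 3) |
        p.1 ∈ cube a ∧ p.2 ∈ cube a ∧ l₁ ≤ dist p.1 p.2 ∧ dist p.1 p.2 ≤ l₂} =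
      ENNReal.ofReal (a ^ 6 * ∫ l in l₁..l₂, P₂ a l) := by
  simp only [mem_cube_iff, ← mem_Icc (a := l₁)]
  rw [volume_prod_Icc_dist_mem_eq_integral _ measurableSet_Icc bddAbove_Icc,
    ← eight_mul_setIntegral_prod_posPart_eq ha h0 h12 h2a]
  norm_num
end

section
/- The pushforward under the map (A,B) ↦ dist(A,B) of the product of the Lebesgue measure restricted to C with itself equals a⁶ times the measure on ℝ with density (with respect to Lebesgue measure) given by the piecewise function P, where P(l) = P₁(l) for 0 ≤ l ≤ a, P(l) = P₂(l) for a ≤ l ≤ √2·a, P(l) = P₃(l) for √2·a ≤ l ≤ √3·a, and P(l) = 0 otherwise. -/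
open MeasureTheory Real Set

/-- The density of separations on the range `0 ≤ l ≤ a`. -/
noncomputable def P₁ (a l : ℝ) : ℝ :=
  l ^ 2 * (4 * π * a ^ 3 - 6 * π * a ^ 2 * l + 8 * a * l ^ 2 - l ^ 3) / a ^ 6

/-- The density of separations on the range `√2·a ≤ l ≤ √3·a`. -/
noncomputable def P₃ (a l : ℝ) : ℝ :=
  l / a ^ 6 *
    (8 * a * (l ^ 2 + a ^ 2) * Real.sqrt (l ^ 2 - 2 * a ^ 2)
      - (l ^ 2 + a ^ 2) * (l ^ 2 + 5 * a ^ 2)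
      + 2 * π * a ^ 2 * (3 * l ^ 2 - 4 * a * l + 3 * a ^ 2)
      + 24 * a ^ 3 * l * Real.arccos (a ^ 2 / (l ^ 2 - a ^ 2))
      - 24 * a ^ 2 * (l ^ 2 + a ^ 2) * Real.arccos (a / Real.sqrt (l ^ 2 - a ^ 2)))

/-- The full piecewise probability density of separations. -/
noncomputable def P (a l : ℝ) : ℝ :=
  if l < 0 then 0
  else if l ≤ a then P₁ a l
  else if l ≤ Real.sqrt 2 * a then P₂ a l
  else if l ≤ Real.sqrt 3 * a then P₃ a l
  else 0

/-!
The squared distance is a sum of three independent squared coordinate differences, each with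
unnormalised density `(a / √u - 1)⁺` on `u > 0`, so its density is a threefold convolution.
Substituting `u = z ^ 2` removes the singularity: convolving this density with `g` gives
`t ↦ ∫ z in 0..a, 2 * (a - z) * g (t - z ^ 2)`. The second and the third convolution are then
evaluated piecewise with explicit antiderivatives; the breakpoints `a`, `√2 a`, `√3 a` of `P` arise
where `t - z ^ 2` crosses `0`, `a ^ 2` or `2 * a ^ 2` for `z ∈ {0, a}`. The square root turns the
density `f` of the squared distance into `l ↦ 2 * l * f (l ^ 2)`.
-/

open scoped ENNReal

/-! ### Pushforwards and convolutions of densities -/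

theorem map_sub_prod_restrict {G : Type*} [AddGroup G] [MeasurableSpace G] [MeasurableAdd₂ G]
    [MeasurableNeg G] (μ : Measure G) [SFinite μ] [μ.IsAddRightInvariant] {s t : Set G}
    (hs : MeasurableSet s) (ht : MeasurableSet t) :
    ((μ.restrict s).prod (μ.restrict t)).map (fun p => p.1 - p.2) =
      μ.withDensity fun d => μ (t ∩ (d + ·) ⁻¹' s) := by
  ext B hB
  have hst : MeasurableSet {q : G × G | q.1 ∈ B ∧ q.2 ∈ t ∧ q.1 + q.2 ∈ s} :=
    (measurable_fst hB).inter ((measurable_snd ht).inter (measurable_add hs))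
  have hpre : (fun p : G × G => p.1 - p.2) ⁻¹' B ∩ s ×ˢ t =
      (fun p : G × G => (p.1 - p.2, p.2)) ⁻¹' {q | q.1 ∈ B ∧ q.2 ∈ t ∧ q.1 + q.2 ∈ s} := by
    ext p
    simp [and_comm]
  rw [Measure.map_apply measurable_sub hB, Measure.prod_restrict,
    Measure.restrict_apply (measurable_sub hB), hpre,
    (measurePreserving_sub_prod μ μ).measure_preimage hst.nullMeasurableSet,
    Measure.prod_apply hst, withDensity_apply _ hB, ← lintegral_indicator hB]
  refine lintegral_congr fun d => ?_
  by_cases hd : d ∈ B <;> simp [hd, inter_def]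

theorem map_sum_pi_of_isEmpty {ι M : Type*} [Fintype ι] [IsEmpty ι] [AddCommMonoid M]
    [MeasurableSpace M] (μ : ι → Measure M) :
    (Measure.pi μ).map (fun x => ∑ i, x i) = Measure.dirac 0 := by
  simp only [Finset.univ_eq_empty, Finset.sum_empty]
  rw [Measure.pi_of_empty, Measure.map_dirac' measurable_const]

theorem map_sum_pi_fin_succ {M : Type*} [AddCommMonoid M] [MeasurableSpace M] [MeasurableAdd₂ M]
    {n : ℕ} (μ : Fin (n + 1) → Measure M) [∀ i, SigmaFinite (μ i)] :
    (Measure.pi μ).map (fun x => ∑ i, x i) =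
      μ 0 ∗ (Measure.pi fun i : Fin n => μ i.succ).map (fun x => ∑ i, x i) := by
  have hsum := (measurePreserving_piFinSuccAbove μ 0).map_eq
  simp only [Fin.succAbove_zero] at hsum
  have hadd := Measure.map_prod_map (μ 0) (Measure.pi fun i : Fin n => μ i.succ) measurable_id
    (g := fun x => ∑ i, x i) (by fun_prop)
  rw [Measure.map_id] at hadd
  rw [Measure.conv, hadd, ← hsum, Measure.map_map (by fun_prop) (by fun_prop),
    Measure.map_map (by fun_prop) (by fun_prop)]
  congr 1
  ext x
  simp [Fin.sum_univ_succ, MeasurableEquiv.piFinSuccAbove, Fin.insertNthEquiv, Fin.tail, Prod.map]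

theorem map_dist_prod_map_toLp {ι : Type*} [Fintype ι] (μ ν : ι → Measure ℝ)
    [∀ i, IsFiniteMeasure (μ i)] [∀ i, IsFiniteMeasure (ν i)] :
    (((Measure.pi μ).map (WithLp.toLp 2)).prod ((Measure.pi ν).map (WithLp.toLp 2))).map
        (fun p : EuclideanSpace ℝ ι × EuclideanSpace ℝ ι => dist p.1 p.2) =
      ((Measure.pi fun i => ((μ i).prod (ν i)).map fun p => (p.1 - p.2) ^ 2).map
        fun x => ∑ i, x i).map sqrt := by
  rw [← Measure.pi_map_pi (μ := fun i => (μ i).prod (ν i)) (f := fun _ p => (p.1 - p.2) ^ 2)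
      fun i => by fun_prop, Measure.map_prod_map _ _ (by fun_prop) (by fun_prop),
    ← ((measurePreserving_arrowProdEquivProdArrow ℝ ℝ ι μ ν).map_eq),
    Measure.map_map (by fun_prop) (by fun_prop), Measure.map_map (by fun_prop) (by fun_prop),
    Measure.map_map (by fun_prop) (by fun_prop), Measure.map_map (by fun_prop) (by fun_prop)]
  congr 1
  ext x
  simp [EuclideanSpace.dist_eq, Real.dist_eq, sq_abs, MeasurableEquiv.arrowProdEquivProdArrow,
    Equiv.arrowProdEquivProdArrow]

theorem lintegral_Ioi_comp_sq (g : ℝ → ℝ≥0∞) :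
    ∫⁻ z in Ioi 0, ENNReal.ofReal (2 * z) * g (z ^ 2) = ∫⁻ u in Ioi 0, g u := by
  have himage : (· ^ 2) '' Ioi (0 : ℝ) = Ioi 0 := by
    ext u
    exact ⟨fun ⟨z, hz, hzu⟩ => hzu ▸ mem_Ioi.2 (pow_pos hz 2),
      fun hu => ⟨√u, sqrt_pos.2 hu, sq_sqrt (le_of_lt hu)⟩⟩
  conv_rhs => rw [← himage]
  refine (lintegral_image_eq_lintegral_deriv_mul_of_monotoneOn measurableSet_Ioi
    (fun z _ => ?_) (fun x hx y _ hxy => pow_le_pow_left₀ (le_of_lt hx) hxy 2) g).symm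
  simpa using (hasDerivAt_pow 2 z).hasDerivWithinAt

theorem lintegral_eq_two_mul_setLIntegral_Ioi_of_even {g : ℝ → ℝ≥0∞} (hg : ∀ x, g (-x) = g x) :
    ∫⁻ x, g x = 2 * ∫⁻ x in Ioi 0, g x := by
  have hneg : ∫⁻ x in Iic 0, g x = ∫⁻ x in Ioi 0, g x := by
    rw [setLIntegral_congr Iio_ae_eq_Iic.symm, ← lintegral_indicator measurableSet_Iio,
      ← lintegral_indicator measurableSet_Ioi, ← lintegral_neg_eq_self]
    simp [indicator, hg]
  rw [← lintegral_add_compl g measurableSet_Ioi, compl_Ioi, hneg, two_mul]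

/- For `u ≤ 0` the density on the right vanishes, since then `√u = 0` and `0⁻¹ = 0`. -/
theorem map_sq_withDensity_of_even {f : ℝ → ℝ≥0∞} (hf : Measurable f)
    (heven : ∀ x, f (-x) = f x) :
    (volume.withDensity f).map (· ^ 2) =
      volume.withDensity fun u => f √u * ENNReal.ofReal (√u)⁻¹ := by
  refine Measure.ext_of_lintegral _ fun ψ hψ => ?_
  have hsupp : (fun u => f √u * ENNReal.ofReal (√u)⁻¹ * ψ u).support ⊆ Ioi 0 := fun u hu => by
    contrapose! hu
    simp [sqrt_eq_zero_of_nonpos (not_lt.1 hu)]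
  rw [lintegral_map hψ (by fun_prop),
    lintegral_withDensity_eq_lintegral_mul _ hf (by fun_prop),
    lintegral_withDensity_eq_lintegral_mul _ (by fun_prop) hψ,
    lintegral_eq_two_mul_setLIntegral_Ioi_of_even (by simp [heven])]
  simp only [Pi.mul_apply]
  rw [← setLIntegral_eq_of_support_subset hsupp,
    ← lintegral_Ioi_comp_sq fun u => f √u * ENNReal.ofReal (√u)⁻¹ * ψ u,
    ← lintegral_const_mul _ (by fun_prop)]
  refine setLIntegral_congr_fun measurableSet_Ioi fun z (hz : 0 < z) => ?_
  have hcancel : ENNReal.ofReal (2 * z) * ENNReal.ofReal z⁻¹ = 2 := by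
    rw [← ENNReal.ofReal_mul (by positivity), mul_inv_cancel_right₀ hz.ne', ENNReal.ofReal_ofNat]
  simp only [sqrt_sq hz.le, ← hcancel]
  ring

theorem map_sqrt_withDensity {f : ℝ → ℝ≥0∞} (hf : Measurable f) (hf0 : ∀ t ≤ 0, f t = 0) :
    (volume.withDensity f).map sqrt =
      volume.withDensity fun l => ENNReal.ofReal (2 * l) * f (l ^ 2) := by
  refine Measure.ext_of_lintegral _ fun ψ hψ => ?_
  have hsupp : (fun t => f t * ψ √t).support ⊆ Ioi 0 := fun t ht => by
    contrapose! ht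
    simp [hf0 t (not_lt.1 ht)]
  have hsupp' : (fun l => ENNReal.ofReal (2 * l) * f (l ^ 2) * ψ l).support ⊆ Ioi 0 :=
    fun l hl => by
      contrapose! hl
      simp [mem_Ioi.not.1 hl]
  rw [lintegral_map hψ (by fun_prop),
    lintegral_withDensity_eq_lintegral_mul _ hf (by fun_prop),
    lintegral_withDensity_eq_lintegral_mul _ (by fun_prop) hψ]
  simp only [Pi.mul_apply]
  rw [← setLIntegral_eq_of_support_subset hsupp, ← setLIntegral_eq_of_support_subset hsupp',
    ← lintegral_Ioi_comp_sq fun t => f t * ψ √t]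
  refine setLIntegral_congr_fun measurableSet_Ioi fun l (hl : 0 < l) => ?_
  simp only [sqrt_sq hl.le, mul_assoc]

theorem lconvolution_eq_zero_of_le_add {f g : ℝ → ℝ≥0∞} {x y t : ℝ} (hf : ∀ s ≤ x, f s = 0)
    (hg : ∀ s ≤ y, g s = 0) (ht : t ≤ x + y) : (f ⋆ₗ g) t = 0 := by
  rw [lconvolution_def, lintegral_eq_zero_of_ae_eq_zero]
  refine .of_forall fun s => ?_
  rcases le_or_gt s x with hs | hs
  · simp [hf s hs]
  · simp [hg (-s + t) (by linarith)]

theorem lconvolution_eq_zero_of_add_le {f g : ℝ → ℝ≥0∞} {x y t : ℝ} (hf : ∀ s, x ≤ s → f s = 0)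
    (hg : ∀ s, y ≤ s → g s = 0) (ht : x + y ≤ t) : (f ⋆ₗ g) t = 0 := by
  rw [lconvolution_def, lintegral_eq_zero_of_ae_eq_zero]
  refine .of_forall fun s => ?_
  rcases le_or_gt x s with hs | hs
  · simp [hf s hs]
  · simp [hg (-s + t) (by linarith)]

theorem lintegral_Ioo_add_Ioo {x y z : ℝ} (hxy : x ≤ y) (hyz : y ≤ z) (f : ℝ → ℝ≥0∞) :
    (∫⁻ w in Ioo x y, f w) + ∫⁻ w in Ioo y z, f w = ∫⁻ w in Ioo x z, f w := by
  simp only [setLIntegral_congr Ioo_ae_eq_Ioc]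
  rw [← Ioc_union_Ioc_eq_Ioc hxy hyz,
    lintegral_union measurableSet_Ioc (Ioc_disjoint_Ioc_of_le le_rfl)]

theorem lintegral_Ioo_eq_ofReal_sub {G f : ℝ → ℝ} {F : ℝ → ℝ≥0∞} {u v : ℝ} (huv : u ≤ v)
    (hG : ContinuousOn G (Icc u v)) (hderiv : ∀ z ∈ Ioo u v, HasDerivAt G (f z) z)
    (hf : ∀ z ∈ Ioo u v, 0 ≤ f z) (hF : ∀ z ∈ Ioo u v, F z = ENNReal.ofReal (f z)) :
    0 ≤ G v - G u ∧ ∫⁻ z in Ioo u v, F z = ENNReal.ofReal (G v - G u) := by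
  have hint : IntegrableOn f (Ioc u v) :=
    intervalIntegral.integrableOn_deriv_of_nonneg hG hderiv hf
  have hftc : ∫ z in Ioo u v, f z = G v - G u := by
    rw [← integral_Ioc_eq_integral_Ioo, ← intervalIntegral.integral_of_le huv]
    exact intervalIntegral.integral_eq_sub_of_hasDerivAt_of_le huv hG hderiv
      ((intervalIntegrable_iff_integrableOn_Ioc_of_le huv).2 hint)
  rw [← hftc, setLIntegral_congr_fun measurableSet_Ioo hF]
  exact ⟨setIntegral_nonneg measurableSet_Ioo hf,
    (ofReal_integral_eq_lintegral_ofReal (hint.mono_set Ioo_subset_Ioc_self)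
      (ae_restrict_of_forall_mem measurableSet_Ioo hf)).symm⟩

/-! ### Squared differences of coordinates -/

/-- The density of `(X - Y) ^ 2` for independent `X`, `Y` distributed as Lebesgue measure on
`[0, a]`. No cutoff is needed: for `u ≤ 0` the value is `0` since then `a / √u = a / 0 = 0`, and for
`u ≥ a ^ 2` the real expression is nonpositive. -/
noncomputable def sqDiffDensity (a u : ℝ) : ℝ≥0∞ :=
  ENNReal.ofReal (a / √u - 1)

theorem measurable_sqDiffDensity (a : ℝ) : Measurable (sqDiffDensity a) := by
  unfold sqDiffDensity
  fun_prop

theorem sqDiffDensity_of_nonpos (a : ℝ) {u : ℝ} (hu : u ≤ 0) : sqDiffDensity a u = 0 := by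
  simp [sqDiffDensity, sqrt_eq_zero_of_nonpos hu]

theorem sqDiffDensity_of_sq_le {a u : ℝ} (hu : a ^ 2 ≤ u) : sqDiffDensity a u = 0 :=
  ENNReal.ofReal_of_nonpos (sub_nonpos.2 (div_le_one_of_le₀ (le_sqrt_of_sq_le hu) (sqrt_nonneg u)))

theorem map_sub_prod_restrict_Icc (a : ℝ) :
    ((volume.restrict (Icc 0 a)).prod (volume.restrict (Icc 0 a))).map (fun p => p.1 - p.2) =
      volume.withDensity fun d => ENNReal.ofReal (a - |d|) := by
  rw [map_sub_prod_restrict volume measurableSet_Icc measurableSet_Icc]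
  congr 1 with d
  rw [preimage_const_add_Icc, Icc_inter_Icc, volume_Icc]
  congr 1
  rcases le_total 0 d with hd | hd
  · rw [abs_of_nonneg hd, min_eq_right (by linarith), max_eq_left (by linarith)]
    ring
  · rw [abs_of_nonpos hd, min_eq_left (by linarith), max_eq_right (by linarith)]
    ring

theorem map_sq_sub_prod_restrict_Icc (a : ℝ) :
    ((volume.restrict (Icc 0 a)).prod (volume.restrict (Icc 0 a))).map
        (fun p => (p.1 - p.2) ^ 2) =
      volume.withDensity (sqDiffDensity a) := by
  have hcomp := Measure.map_map (μ := (volume.restrict (Icc 0 a)).prod (volume.restrict (Icc 0 a)))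
    (g := fun d : ℝ => d ^ 2) (f := fun p : ℝ × ℝ => p.1 - p.2) (by fun_prop) (by fun_prop)
  rw [map_sub_prod_restrict_Icc, map_sq_withDensity_of_even (by fun_prop) (by simp)] at hcomp
  refine hcomp.symm.trans ?_
  congr 1 with u
  rw [← ENNReal.ofReal_mul' (inv_nonneg.2 (sqrt_nonneg u)), abs_of_nonneg (sqrt_nonneg u)]
  rcases le_or_gt u 0 with hu | hu
  · simp [sqDiffDensity_of_nonpos a hu, sqrt_eq_zero_of_nonpos hu]
  · rw [sqDiffDensity, sub_mul, mul_inv_cancel₀ (sqrt_pos.2 hu).ne', div_eq_mul_inv]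

theorem sqDiffDensity_lconvolution_apply (a : ℝ) (g : ℝ → ℝ≥0∞) (t : ℝ) :
    (sqDiffDensity a ⋆ₗ g) t =
      ∫⁻ z in Ioo 0 a, ENNReal.ofReal (2 * (a - z)) * g (t - z ^ 2) := by
  have hsupp : (fun u => sqDiffDensity a u * g (-u + t)).support ⊆ Ioi 0 := fun u hu => by
    contrapose! hu
    simp [sqDiffDensity_of_nonpos a (not_lt.1 hu)]
  rw [lconvolution_def, ← setLIntegral_eq_of_support_subset hsupp,
    ← lintegral_Ioi_comp_sq fun u => sqDiffDensity a u * g (-u + t),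
    ← lintegral_indicator measurableSet_Ioi, ← lintegral_indicator measurableSet_Ioo]
  refine lintegral_congr fun z => ?_
  rcases le_or_gt z 0 with hz | hz
  · simp [hz.not_gt]
  have hdensity : ENNReal.ofReal (2 * z) * sqDiffDensity a (z ^ 2) =
      ENNReal.ofReal (2 * (a - z)) := by
    rw [sqDiffDensity, sqrt_sq hz.le, ← ENNReal.ofReal_mul (by positivity)]
    congr 1
    field_simp
  rw [indicator_of_mem (mem_Ioi.2 hz), ← mul_assoc, hdensity, neg_add_eq_sub]
  rcases lt_or_ge z a with hza | hza
  · rw [indicator_of_mem (mem_Ioo.2 ⟨hz, hza⟩)]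
  · rw [indicator_of_notMem (fun h => h.2.not_ge hza), ENNReal.ofReal_of_nonpos (by linarith),
      zero_mul]

/-! ### Antiderivatives -/

theorem hasDerivAt_arcsin_div {x r : ℝ → ℝ} {x' r' y z : ℝ} (hx : HasDerivAt x x' z)
    (hr : HasDerivAt r r' z) (hr0 : 0 < r z) (hy : 0 < y) (hxyr : x z ^ 2 + y ^ 2 = r z ^ 2) :
    HasDerivAt (fun s => arcsin (x s / r s)) ((x' * r z - x z * r') / (r z * y)) z := by
  have hcos : 1 - (x z / r z) ^ 2 = (y / r z) ^ 2 := by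
    field_simp
    linarith
  have hpos : 0 < (y / r z) ^ 2 := by positivity
  have hlt : |x z / r z| < 1 := (sq_lt_one_iff_abs_lt_one _).1 (by linarith)
  refine ((hasDerivAt_arcsin (abs_lt.1 hlt).1.ne' (abs_lt.1 hlt).2.ne).comp z
    (hx.div hr hr0.ne')).congr_deriv ?_
  rw [hcos, sqrt_sq (by positivity)]
  field_simp

theorem hasDerivAt_sqrt_sub_sq {c z : ℝ} (h : z ^ 2 < c) :
    HasDerivAt (fun z => √(c - z ^ 2)) (-z / √(c - z ^ 2)) z := by
  have hsub : HasDerivAt (fun z : ℝ => c - z ^ 2) (-(2 * z)) z := by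
    simpa using (hasDerivAt_pow 2 z).const_sub c
  refine (hsub.sqrt (sub_pos.2 h).ne').congr_deriv ?_
  have := sqrt_pos.2 (sub_pos.2 h)
  field_simp

theorem hasDerivAt_sqrt_sub_sq_pow_three {c z : ℝ} (h : z ^ 2 < c) :
    HasDerivAt (fun z => √(c - z ^ 2) ^ 3) (-3 * z * √(c - z ^ 2)) z := by
  refine ((hasDerivAt_sqrt_sub_sq h).pow 3).congr_deriv ?_
  have := sqrt_pos.2 (sub_pos.2 h)
  push_cast
  field_simp

theorem hasDerivAt_arcsin_div_sqrt {c z : ℝ} (h : z ^ 2 < c) :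
    HasDerivAt (fun z => arcsin (z / √c)) (1 / √(c - z ^ 2)) z := by
  have hc : 0 < c := (sq_nonneg z).trans_lt h
  have hw := sqrt_pos.2 (sub_pos.2 h)
  refine (hasDerivAt_arcsin_div (hasDerivAt_id z) (hasDerivAt_const z √c) (sqrt_pos.2 hc) hw
    ?_).congr_deriv ?_
  · rw [sq_sqrt hc.le, sq_sqrt (sub_pos.2 h).le, id, add_sub_cancel]
  · have := sqrt_pos.2 hc
    field_simp
    simp

theorem hasDerivAt_arccos_div_sqrt_sub_sq {a c z : ℝ} (h : z ^ 2 < c - a ^ 2) :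
    HasDerivAt (fun z => arccos (a / √(c - z ^ 2)))
      (-(a * z) / ((c - z ^ 2) * √(c - a ^ 2 - z ^ 2))) z := by
  have hw2 : 0 < c - z ^ 2 := by nlinarith
  have hw := sqrt_pos.2 hw2
  have hq := sqrt_pos.2 (sub_pos.2 h)
  have hderiv := hasDerivAt_arcsin_div (hasDerivAt_const z a)
    (hasDerivAt_sqrt_sub_sq (sub_pos.1 hw2)) hw hq
    (by rw [sq_sqrt hw2.le, sq_sqrt (sub_pos.2 h).le]; ring)
  refine (hderiv.const_sub (π / 2)).congr_deriv ?_
  have hsq : c - z ^ 2 = √(c - z ^ 2) ^ 2 := (sq_sqrt hw2.le).symm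
  rw [show (c - z ^ 2) * √(c - a ^ 2 - z ^ 2) = √(c - z ^ 2) ^ 2 * √(c - a ^ 2 - z ^ 2) by
    rw [← hsq]]
  field_simp
  ring

theorem hasDerivAt_arcsin_mul_div_sqrt_mul_sqrt {a l z : ℝ} (hl : 0 < l)
    (h : z ^ 2 < l ^ 2 - a ^ 2) :
    HasDerivAt (fun z => arcsin (a * z / (√(l ^ 2 - a ^ 2) * √(l ^ 2 - z ^ 2))))
      (a * l / ((l ^ 2 - z ^ 2) * √(l ^ 2 - a ^ 2 - z ^ 2))) z := by
  have hb2 : 0 < l ^ 2 - a ^ 2 := (sq_nonneg z).trans_lt h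
  have hw2 : 0 < l ^ 2 - z ^ 2 := by nlinarith
  have hb := sqrt_pos.2 hb2
  have hw := sqrt_pos.2 hw2
  have hq := sqrt_pos.2 (sub_pos.2 h)
  refine (hasDerivAt_arcsin_div ((hasDerivAt_id z).const_mul a)
    ((hasDerivAt_sqrt_sub_sq (sub_pos.1 hw2)).const_mul _) (mul_pos hb hw) (mul_pos hl hq)
    ?_).congr_deriv ?_
  · simp only [mul_pow, sq_sqrt hb2.le, sq_sqrt hw2.le, sq_sqrt (sub_pos.2 h).le, id]
    ring
  · have hsq := sq_sqrt hw2.le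
    generalize √(l ^ 2 - z ^ 2) = w at *
    rw [← hsq, id]
    field_simp
    linear_combination a * hsq

theorem arcsin_div_eq_arccos_div {x y r : ℝ} (hx : 0 ≤ x) (hy : 0 ≤ y) (hr : 0 < r)
    (h : x ^ 2 + y ^ 2 = r ^ 2) : arcsin (x / r) = arccos (y / r) := by
  rw [arccos_eq_arcsin (by positivity), show 1 - (y / r) ^ 2 = (x / r) ^ 2 by
    field_simp; linarith, sqrt_sq (by positivity)]

/-- An antiderivative of `z ↦ 2 * √(c - z ^ 2)` on `z ^ 2 < c`. -/
noncomputable def sqrtPrimitive (c z : ℝ) : ℝ :=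
  z * √(c - z ^ 2) + c * arcsin (z / √c)

/-- An antiderivative of `z ↦ arccos (a / √(l ^ 2 - z ^ 2))` on `z ^ 2 < l ^ 2 - a ^ 2`, found
by parts. -/
noncomputable def arccosPrimitive (a l z : ℝ) : ℝ :=
  z * arccos (a / √(l ^ 2 - z ^ 2))
    + l * arcsin (a * z / (√(l ^ 2 - a ^ 2) * √(l ^ 2 - z ^ 2)))
    - a * arcsin (z / √(l ^ 2 - a ^ 2))

/-- An antiderivative of `z ↦ -2 * z * arccos (a / √(l ^ 2 - z ^ 2))` on
`z ^ 2 < l ^ 2 - a ^ 2`. -/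
noncomputable def mulArccosPrimitive (a l z : ℝ) : ℝ :=
  (l ^ 2 - z ^ 2) * arccos (a / √(l ^ 2 - z ^ 2)) - a * √(l ^ 2 - a ^ 2 - z ^ 2)

theorem hasDerivAt_sqrtPrimitive {c z : ℝ} (h : z ^ 2 < c) :
    HasDerivAt (sqrtPrimitive c) (2 * √(c - z ^ 2)) z := by
  refine (((hasDerivAt_id z).mul (hasDerivAt_sqrt_sub_sq h)).add
    ((hasDerivAt_arcsin_div_sqrt h).const_mul c)).congr_deriv ?_
  have hw := sqrt_pos.2 (sub_pos.2 h)
  have hsq := sq_sqrt (sub_pos.2 h).le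
  simp only [id]
  field_simp
  linarith

theorem hasDerivAt_arccosPrimitive {a l z : ℝ} (hl : 0 < l) (h : z ^ 2 < l ^ 2 - a ^ 2) :
    HasDerivAt (arccosPrimitive a l) (arccos (a / √(l ^ 2 - z ^ 2))) z := by
  refine ((((hasDerivAt_id z).mul (hasDerivAt_arccos_div_sqrt_sub_sq h)).add
    ((hasDerivAt_arcsin_mul_div_sqrt_mul_sqrt hl h).const_mul l)).sub
    ((hasDerivAt_arcsin_div_sqrt h).const_mul a)).congr_deriv ?_
  have hw2 : 0 < l ^ 2 - z ^ 2 := by nlinarith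
  have hq := sqrt_pos.2 (sub_pos.2 h)
  simp only [id]
  field_simp
  ring

theorem hasDerivAt_mulArccosPrimitive {a l z : ℝ} (h : z ^ 2 < l ^ 2 - a ^ 2) :
    HasDerivAt (mulArccosPrimitive a l) (-2 * z * arccos (a / √(l ^ 2 - z ^ 2))) z := by
  refine ((((hasDerivAt_pow 2 z).const_sub (l ^ 2)).mul
    (hasDerivAt_arccos_div_sqrt_sub_sq h)).sub
    ((hasDerivAt_sqrt_sub_sq h).const_mul a)).congr_deriv ?_
  have hw2 : 0 < l ^ 2 - z ^ 2 := by nlinarith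
  have hq := sqrt_pos.2 (sub_pos.2 h)
  push_cast
  field_simp
  ring

theorem continuous_sqrtPrimitive (c : ℝ) : Continuous (sqrtPrimitive c) := by
  unfold sqrtPrimitive
  fun_prop

theorem continuousOn_arccos_div_sqrt_sub_sq (a l : ℝ) :
    ContinuousOn (fun z => arccos (a / √(l ^ 2 - z ^ 2))) {z | z ^ 2 < l ^ 2} :=
  continuous_arccos.comp_continuousOn <| continuousOn_const.div (by fun_prop)
    fun _ hz => (sqrt_pos.2 (sub_pos.2 hz)).ne'

theorem continuousOn_arccosPrimitive {a l : ℝ} (h : a ^ 2 < l ^ 2) :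
    ContinuousOn (arccosPrimitive a l) {z | z ^ 2 < l ^ 2} := by
  have hmul : ContinuousOn (fun z => arcsin (a * z / (√(l ^ 2 - a ^ 2) * √(l ^ 2 - z ^ 2))))
      {z | z ^ 2 < l ^ 2} :=
    continuous_arcsin.comp_continuousOn <| ContinuousOn.div (by fun_prop) (by fun_prop)
      fun _ hz => (mul_pos (sqrt_pos.2 (sub_pos.2 h)) (sqrt_pos.2 (sub_pos.2 hz))).ne'
  have harccos := continuousOn_arccos_div_sqrt_sub_sq a l
  unfold arccosPrimitive
  fun_prop

theorem continuousOn_mulArccosPrimitive (a l : ℝ) :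
    ContinuousOn (mulArccosPrimitive a l) {z | z ^ 2 < l ^ 2} := by
  have harccos := continuousOn_arccos_div_sqrt_sub_sq a l
  unfold mulArccosPrimitive
  fun_prop

theorem sqrtPrimitive_of_sq_add_sq {c y z : ℝ} (hz : 0 ≤ z) (hy : 0 ≤ y) (hc : 0 < c)
    (h : z ^ 2 + y ^ 2 = c) : sqrtPrimitive c z = z * y + c * arccos (y / √c) := by
  rw [sqrtPrimitive, ← eq_sub_iff_add_eq'.2 h, sqrt_sq hy,
    arcsin_div_eq_arccos_div hz hy (sqrt_pos.2 hc) (by rw [h, sq_sqrt hc.le])]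

theorem mulArccosPrimitive_of_sq_add_sq (a : ℝ) {l w z : ℝ} (hw : 0 ≤ w)
    (h : z ^ 2 + w ^ 2 = l ^ 2) :
    mulArccosPrimitive a l z = w ^ 2 * arccos (a / w) - a * √(w ^ 2 - a ^ 2) := by
  rw [mulArccosPrimitive, sub_right_comm, ← eq_sub_iff_add_eq'.2 h, sqrt_sq hw]

theorem arccosPrimitive_of_sq_add_sq {a b l w z : ℝ} (hb : 0 ≤ b) (hw : 0 ≤ w)
    (hab : a ^ 2 + b ^ 2 = l ^ 2) (hzw : z ^ 2 + w ^ 2 = l ^ 2) :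
    arccosPrimitive a l z =
      z * arccos (a / w) + l * arcsin (a * z / (b * w)) - a * arcsin (z / b) := by
  rw [arccosPrimitive, ← eq_sub_iff_add_eq'.2 hab, ← eq_sub_iff_add_eq'.2 hzw, sqrt_sq hb,
    sqrt_sq hw]

theorem arccosPrimitive_zero (a l : ℝ) : arccosPrimitive a l 0 = 0 := by
  simp [arccosPrimitive]

theorem arccosPrimitive_of_sq_add_sq_eq {a b l : ℝ} (ha : 0 < a) (hb : 0 < b)
    (hab : a ^ 2 + b ^ 2 = l ^ 2) : arccosPrimitive a l b = (l - a) * (π / 2) := by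
  rw [arccosPrimitive_of_sq_add_sq hb.le ha.le hab (by linarith), div_self ha.ne', arccos_one,
    mul_comm a b, div_self (mul_pos hb ha).ne', div_self hb.ne', arcsin_one]
  ring

theorem arccosPrimitive_self {a b l : ℝ} (hb : 0 ≤ b) (hab : a ^ 2 + b ^ 2 = l ^ 2) :
    arccosPrimitive a l a =
      2 * a * arccos (a / b) - l * arccos (a ^ 2 / b ^ 2) + (l - a) * (π / 2) := by
  rw [arccosPrimitive_of_sq_add_sq hb hb hab hab, ← sq, ← sq, arcsin_eq_pi_div_two_sub_arccos,
    arcsin_eq_pi_div_two_sub_arccos]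
  ring

theorem arcsin_eq_half_arccos {x y : ℝ} (hx : 0 ≤ x) (h : 2 * x ^ 2 = 1 - y) (hy : -1 ≤ y) :
    arcsin x = arccos y / 2 := by
  have hnonneg := arccos_nonneg y
  have hle := arccos_le_pi y
  refine arcsin_eq_of_sin_eq ?_ ⟨by linarith, by linarith⟩
  rw [← sq_eq_sq₀ (sin_nonneg_of_nonneg_of_le_pi (by linarith) (by linarith)) hx,
    sin_sq_eq_half_sub, mul_div_cancel₀ _ two_ne_zero, cos_arccos hy (by nlinarith)]
  linarith

theorem arccos_div_sqrt_two_mul_self {a : ℝ} (ha : a ≠ 0) : arccos (a / (√2 * a)) = π / 4 := by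
  rw [div_mul_cancel_right₀ ha, ← sqrt_div_self, ← cos_pi_div_four, arccos_cos] <;>
    linarith [pi_pos]

theorem arccosPrimitive_of_two_mul_sq_add_sq {a b l r : ℝ} (ha : 0 < a) (hb : 0 < b) (hr : 0 ≤ r)
    (hab : a ^ 2 + b ^ 2 = l ^ 2) (har : a ^ 2 + r ^ 2 = b ^ 2) :
    arccosPrimitive a l r =
      r * (π / 4) + l * (arccos (a ^ 2 / b ^ 2) / 2) - a * arccos (a / b) := by
  have hsq : (√2 * a) ^ 2 = 2 * a ^ 2 := by rw [mul_pow, sq_sqrt two_pos.le]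
  have hhalf : arcsin (a * r / (b * (√2 * a))) = arccos (a ^ 2 / b ^ 2) / 2 := by
    refine arcsin_eq_half_arccos (by positivity) ?_ ((by norm_num : (-1 : ℝ) ≤ 0).trans
      (by positivity))
    rw [div_pow, mul_pow, mul_pow b, hsq]
    field_simp
    linarith
  rw [arccosPrimitive_of_sq_add_sq (w := √2 * a) hb.le (by positivity) hab (by linarith), hhalf,
    arccos_div_sqrt_two_mul_self ha.ne', arcsin_div_eq_arccos_div hr ha.le hb (by linarith)]

/-- On `(0, a ^ 2]`, the density of the squared distance of two points uniform in `[0, a] ^ 2`,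
multiplied by `a ^ 4`. -/
noncomputable def squareDensity₁ (a t : ℝ) : ℝ :=
  π * a ^ 2 - 4 * a * √t + t

/-- On `(a ^ 2, 2 * a ^ 2]`, the density of the squared distance of two points uniform in
`[0, a] ^ 2`, multiplied by `a ^ 4`. -/
noncomputable def squareDensity₂ (a t : ℝ) : ℝ :=
  π * a ^ 2 - 2 * a ^ 2 - 4 * a ^ 2 * arccos (a / √t) + 4 * a * √(t - a ^ 2) - t

/-- An antiderivative of `z ↦ 2 * (a - z) * (a / √(t - z ^ 2) - 1)` on `z ^ 2 < t`, for the twofold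
convolution. -/
noncomputable def sqDiffPrimitive (a t z : ℝ) : ℝ :=
  2 * a ^ 2 * arcsin (z / √t) + 2 * a * √(t - z ^ 2) - 2 * a * z + z ^ 2

/-- An antiderivative of `z ↦ 2 * (a - z) * squareDensity₁ a (l ^ 2 - z ^ 2)` on `z ^ 2 < l ^ 2`,
for the threefold convolution at `l ^ 2`. -/
noncomputable def squarePrimitive₁ (a l z : ℝ) : ℝ :=
  π * a ^ 2 * (2 * a * z - z ^ 2) - 4 * a ^ 2 * sqrtPrimitive (l ^ 2) z
    - 8 * a / 3 * √(l ^ 2 - z ^ 2) ^ 3 + 2 * a * (l ^ 2 * z - z ^ 3 / 3)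
    + (l ^ 2 - z ^ 2) ^ 2 / 2

/-- An antiderivative of `z ↦ 2 * (a - z) * squareDensity₂ a (l ^ 2 - z ^ 2)` on
`z ^ 2 < l ^ 2 - a ^ 2`, for the threefold convolution at `l ^ 2`. -/
noncomputable def squarePrimitive₂ (a l z : ℝ) : ℝ :=
  -8 * a ^ 3 * arccosPrimitive a l z - 4 * a ^ 2 * mulArccosPrimitive a l z
    + 4 * a ^ 2 * sqrtPrimitive (l ^ 2 - a ^ 2) z + 8 * a / 3 * √(l ^ 2 - a ^ 2 - z ^ 2) ^ 3
    + (π - 2) * a ^ 2 * (2 * a * z - z ^ 2) - 2 * a * (l ^ 2 * z - z ^ 3 / 3)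
    - (l ^ 2 - z ^ 2) ^ 2 / 2

theorem hasDerivAt_sqDiffPrimitive (a : ℝ) {t z : ℝ} (h : z ^ 2 < t) :
    HasDerivAt (sqDiffPrimitive a t) (2 * (a - z) * (a / √(t - z ^ 2) - 1)) z := by
  refine (((((hasDerivAt_arcsin_div_sqrt h).const_mul (2 * a ^ 2)).add
    ((hasDerivAt_sqrt_sub_sq h).const_mul (2 * a))).sub ((hasDerivAt_id z).const_mul (2 * a))).add
    (hasDerivAt_pow 2 z)).congr_deriv ?_
  have hw := sqrt_pos.2 (sub_pos.2 h)
  push_cast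
  field_simp
  ring

theorem hasDerivAt_two_mul_sub_sq (a z : ℝ) :
    HasDerivAt (fun z => 2 * a * z - z ^ 2) (2 * (a - z)) z := by
  refine (((hasDerivAt_id z).const_mul (2 * a)).sub (hasDerivAt_pow 2 z)).congr_deriv ?_
  push_cast
  ring

theorem hasDerivAt_mul_sub_pow_three_div (c z : ℝ) :
    HasDerivAt (fun z => c * z - z ^ 3 / 3) (c - z ^ 2) z := by
  refine (((hasDerivAt_id z).const_mul c).sub ((hasDerivAt_pow 3 z).div_const 3)).congr_deriv ?_
  push_cast
  ring

theorem hasDerivAt_sub_sq_sq_div_two (c z : ℝ) :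
    HasDerivAt (fun z => (c - z ^ 2) ^ 2 / 2) (-2 * z * (c - z ^ 2)) z := by
  refine ((((hasDerivAt_pow 2 z).const_sub c).pow 2).div_const 2).congr_deriv ?_
  push_cast
  ring

theorem hasDerivAt_squarePrimitive₁ (a : ℝ) {l z : ℝ} (h : z ^ 2 < l ^ 2) :
    HasDerivAt (squarePrimitive₁ a l) (2 * (a - z) * squareDensity₁ a (l ^ 2 - z ^ 2)) z := by
  refine ((((((hasDerivAt_two_mul_sub_sq a z).const_mul (π * a ^ 2)).sub
    ((hasDerivAt_sqrtPrimitive h).const_mul (4 * a ^ 2))).sub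
    ((hasDerivAt_sqrt_sub_sq_pow_three h).const_mul (8 * a / 3))).add
    ((hasDerivAt_mul_sub_pow_three_div (l ^ 2) z).const_mul (2 * a))).add
    (hasDerivAt_sub_sq_sq_div_two (l ^ 2) z)).congr_deriv ?_
  rw [squareDensity₁]
  ring

theorem hasDerivAt_squarePrimitive₂ {a l z : ℝ} (hl : 0 < l) (h : z ^ 2 < l ^ 2 - a ^ 2) :
    HasDerivAt (squarePrimitive₂ a l) (2 * (a - z) * squareDensity₂ a (l ^ 2 - z ^ 2)) z := by
  refine ((((((((hasDerivAt_arccosPrimitive hl h).const_mul (-8 * a ^ 3)).sub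
    ((hasDerivAt_mulArccosPrimitive h).const_mul (4 * a ^ 2))).add
    ((hasDerivAt_sqrtPrimitive h).const_mul (4 * a ^ 2))).add
    ((hasDerivAt_sqrt_sub_sq_pow_three h).const_mul (8 * a / 3))).add
    ((hasDerivAt_two_mul_sub_sq a z).const_mul ((π - 2) * a ^ 2))).sub
    ((hasDerivAt_mul_sub_pow_three_div (l ^ 2) z).const_mul (2 * a))).sub
    (hasDerivAt_sub_sq_sq_div_two (l ^ 2) z)).congr_deriv ?_
  rw [squareDensity₂, sub_right_comm (l ^ 2) (z ^ 2)]
  ring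

theorem continuous_sqDiffPrimitive (a t : ℝ) : Continuous (sqDiffPrimitive a t) := by
  unfold sqDiffPrimitive
  fun_prop

theorem continuous_squarePrimitive₁ (a l : ℝ) : Continuous (squarePrimitive₁ a l) := by
  have := continuous_sqrtPrimitive (l ^ 2)
  unfold squarePrimitive₁
  fun_prop

theorem continuousOn_squarePrimitive₂ {a l : ℝ} (h : a ^ 2 < l ^ 2) :
    ContinuousOn (squarePrimitive₂ a l) {z | z ^ 2 < l ^ 2} := by
  have hsqrt := (continuous_sqrtPrimitive (l ^ 2 - a ^ 2)).continuousOn (s := {z | z ^ 2 < l ^ 2})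
  have harccos := continuousOn_arccosPrimitive h
  have hmul := continuousOn_mulArccosPrimitive a l
  unfold squarePrimitive₂
  fun_prop

/-! ### The twofold convolution -/

theorem lintegral_Ioo_mul_comp_sub_sq {G h : ℝ → ℝ} {g : ℝ → ℝ≥0∞} {a t u v : ℝ} (huv : u ≤ v)
    (hva : v ≤ a) (hG : ContinuousOn G (Icc u v))
    (hderiv : ∀ z ∈ Ioo u v, HasDerivAt G (2 * (a - z) * h (t - z ^ 2)) z)
    (hg : ∀ z ∈ Ioo u v, 0 ≤ h (t - z ^ 2) ∧ g (t - z ^ 2) = ENNReal.ofReal (h (t - z ^ 2))) :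
    0 ≤ G v - G u ∧
      ∫⁻ z in Ioo u v, ENNReal.ofReal (2 * (a - z)) * g (t - z ^ 2) =
        ENNReal.ofReal (G v - G u) := by
  have hpos : ∀ z ∈ Ioo u v, 0 ≤ 2 * (a - z) := fun z hz => by linarith [hz.2]
  refine lintegral_Ioo_eq_ofReal_sub huv hG hderiv
    (fun z hz => mul_nonneg (hpos z hz) (hg z hz).1) fun z hz => ?_
  rw [(hg z hz).2, ENNReal.ofReal_mul (hpos z hz)]

theorem lintegral_Ioo_mul_comp_sub_sq_eq_zero {g : ℝ → ℝ≥0∞} {a t u v : ℝ}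
    (hg : ∀ z ∈ Ioo u v, g (t - z ^ 2) = 0) :
    ∫⁻ z in Ioo u v, ENNReal.ofReal (2 * (a - z)) * g (t - z ^ 2) = 0 :=
  setLIntegral_eq_zero measurableSet_Ioo fun z hz => by simp [hg z hz]

theorem sub_sq_mem_Ioo {t u v z : ℝ} (hu : 0 ≤ u) (hz : z ∈ Ioo u v) :
    t - z ^ 2 ∈ Ioo (t - v ^ 2) (t - u ^ 2) := by
  have huz := pow_lt_pow_left₀ hz.1 hu two_ne_zero
  have hzv := pow_lt_pow_left₀ hz.2 (hu.trans hz.1.le) two_ne_zero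
  exact ⟨by linarith, by linarith⟩

theorem lintegral_sqDiffDensity_comp_sub_sq {a t u v : ℝ} (ha : 0 ≤ a) (hu : 0 ≤ u) (huv : u ≤ v)
    (hva : v ≤ a) (htu : t ≤ u ^ 2 + a ^ 2) (hvt : v ^ 2 ≤ t) :
    0 ≤ sqDiffPrimitive a t v - sqDiffPrimitive a t u ∧
      ∫⁻ z in Ioo u v, ENNReal.ofReal (2 * (a - z)) * sqDiffDensity a (t - z ^ 2) =
        ENNReal.ofReal (sqDiffPrimitive a t v - sqDiffPrimitive a t u) := by
  refine lintegral_Ioo_mul_comp_sub_sq huv hva (continuous_sqDiffPrimitive a t).continuousOn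
    (h := fun s => a / √s - 1) (fun z hz => hasDerivAt_sqDiffPrimitive a ?_)
    fun z hz => ⟨?_, rfl⟩
  · linarith [(sub_sq_mem_Ioo (t := t) hu hz).1]
  · have hmem := sub_sq_mem_Ioo (t := t) hu hz
    have hle : √(t - z ^ 2) ≤ a := sqrt_le_iff.2 ⟨ha, by linarith [hmem.2]⟩
    exact sub_nonneg.2 ((one_le_div (sqrt_pos.2 (by linarith [hmem.1]))).2 hle)

theorem sqDiffPrimitive_sqrt_sub_zero (a : ℝ) {t : ℝ} (ht : 0 < t) :
    sqDiffPrimitive a t √t - sqDiffPrimitive a t 0 = squareDensity₁ a t := by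
  simp only [sqDiffPrimitive, squareDensity₁, div_self (sqrt_pos.2 ht).ne', arcsin_one,
    sq_sqrt ht.le, sub_self, sqrt_zero, zero_div, arcsin_zero, ne_eq, OfNat.ofNat_ne_zero,
    not_false_eq_true, zero_pow, sub_zero]
  ring

theorem sqDiffPrimitive_self_sub_sqrt {a t : ℝ} (ha : 0 < a) (hat : a ^ 2 < t) :
    sqDiffPrimitive a t a - sqDiffPrimitive a t √(t - a ^ 2) = squareDensity₂ a t := by
  have ht : 0 < t := (sq_nonneg a).trans_lt hat
  have hsq : √(t - a ^ 2) ^ 2 = t - a ^ 2 := sq_sqrt (sub_pos.2 hat).le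
  have harcsin : arcsin (√(t - a ^ 2) / √t) = arccos (a / √t) :=
    arcsin_div_eq_arccos_div (sqrt_nonneg _) ha.le (sqrt_pos.2 ht) (by
      rw [hsq, sq_sqrt ht.le, sub_add_cancel])
  rw [sqDiffPrimitive, sqDiffPrimitive, squareDensity₂, harcsin, hsq, sub_sub_cancel,
    sqrt_sq ha.le, arcsin_eq_pi_div_two_sub_arccos]
  ring

theorem sqDiffDensity_lconvolution_self_of_le {a t : ℝ} (ha : 0 ≤ a) (ht : 0 < t)
    (hta : t ≤ a ^ 2) :
    0 ≤ squareDensity₁ a t ∧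
      (sqDiffDensity a ⋆ₗ sqDiffDensity a) t = ENNReal.ofReal (squareDensity₁ a t) := by
  have hsq : √t ^ 2 = t := sq_sqrt ht.le
  have hle : √t ≤ a := sqrt_le_iff.2 ⟨ha, hta⟩
  have hpiece := lintegral_sqDiffDensity_comp_sub_sq ha le_rfl (sqrt_nonneg t) hle
    (by simpa) hsq.le
  have hzero : ∫⁻ z in Ioo √t a, ENNReal.ofReal (2 * (a - z)) * sqDiffDensity a (t - z ^ 2) = 0 :=
    lintegral_Ioo_mul_comp_sub_sq_eq_zero fun z hz => sqDiffDensity_of_nonpos a (by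
      linarith [(sub_sq_mem_Ioo (t := t) (sqrt_nonneg t) hz).2])
  rw [sqDiffPrimitive_sqrt_sub_zero a ht] at hpiece
  rw [sqDiffDensity_lconvolution_apply, ← lintegral_Ioo_add_Ioo (sqrt_nonneg t) hle, hpiece.2,
    hzero, add_zero]
  exact ⟨hpiece.1, rfl⟩

theorem sqDiffDensity_lconvolution_self_of_lt {a t : ℝ} (ha : 0 < a) (hat : a ^ 2 < t)
    (hta : t ≤ 2 * a ^ 2) :
    0 ≤ squareDensity₂ a t ∧
      (sqDiffDensity a ⋆ₗ sqDiffDensity a) t = ENNReal.ofReal (squareDensity₂ a t) := by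
  have hq := sqrt_nonneg (t - a ^ 2)
  have hsq : √(t - a ^ 2) ^ 2 = t - a ^ 2 := sq_sqrt (sub_pos.2 hat).le
  have hle : √(t - a ^ 2) ≤ a := sqrt_le_iff.2 ⟨ha.le, by linarith⟩
  have hpiece := lintegral_sqDiffDensity_comp_sub_sq ha.le hq hle le_rfl
    (by rw [hsq, sub_add_cancel]) hat.le
  have hzero : ∫⁻ z in Ioo 0 √(t - a ^ 2),
      ENNReal.ofReal (2 * (a - z)) * sqDiffDensity a (t - z ^ 2) = 0 :=
    lintegral_Ioo_mul_comp_sub_sq_eq_zero fun z hz => sqDiffDensity_of_sq_le (by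
      linarith [(sub_sq_mem_Ioo (t := t) le_rfl hz).1])
  rw [sqDiffPrimitive_self_sub_sqrt ha hat] at hpiece
  rw [sqDiffDensity_lconvolution_apply, ← lintegral_Ioo_add_Ioo hq hle, hpiece.2, hzero, zero_add]
  exact ⟨hpiece.1, rfl⟩

theorem sqDiffDensity_lconvolution_self_of_nonpos (a : ℝ) {t : ℝ} (ht : t ≤ 0) :
    (sqDiffDensity a ⋆ₗ sqDiffDensity a) t = 0 :=
  lconvolution_eq_zero_of_le_add (fun _ => sqDiffDensity_of_nonpos a)
    (fun _ => sqDiffDensity_of_nonpos a) (ht.trans_eq (add_zero 0).symm)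

theorem sqDiffDensity_lconvolution_self_of_two_mul_sq_le {a t : ℝ} (ht : 2 * a ^ 2 ≤ t) :
    (sqDiffDensity a ⋆ₗ sqDiffDensity a) t = 0 :=
  lconvolution_eq_zero_of_add_le (fun _ => sqDiffDensity_of_sq_le)
    (fun _ => sqDiffDensity_of_sq_le) (by linarith)

/-! ### The threefold convolution -/

theorem lintegral_squareDensity₁ {a l u v : ℝ} (ha : 0 ≤ a) (hu : 0 ≤ u) (huv : u ≤ v)
    (hva : v ≤ a) (hlu : l ^ 2 ≤ u ^ 2 + a ^ 2) (hvl : v ^ 2 ≤ l ^ 2) :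
    0 ≤ squarePrimitive₁ a l v - squarePrimitive₁ a l u ∧
      ∫⁻ z in Ioo u v, ENNReal.ofReal (2 * (a - z)) *
          (sqDiffDensity a ⋆ₗ sqDiffDensity a) (l ^ 2 - z ^ 2) =
        ENNReal.ofReal (squarePrimitive₁ a l v - squarePrimitive₁ a l u) := by
  have hmem := fun z (hz : z ∈ Ioo u v) => sub_sq_mem_Ioo (t := l ^ 2) hu hz
  exact lintegral_Ioo_mul_comp_sub_sq huv hva (continuous_squarePrimitive₁ a l).continuousOn
    (fun z hz => hasDerivAt_squarePrimitive₁ a (by linarith [(hmem z hz).1]))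
    fun z hz => sqDiffDensity_lconvolution_self_of_le ha (by linarith [(hmem z hz).1])
      (by linarith [(hmem z hz).2])

theorem lintegral_squareDensity₂ {a l u v : ℝ} (ha : 0 < a) (hl : 0 < l) (hu : 0 ≤ u) (huv : u ≤ v)
    (hva : v ≤ a) (hlu : l ^ 2 ≤ u ^ 2 + 2 * a ^ 2) (hvl : v ^ 2 + a ^ 2 ≤ l ^ 2) :
    0 ≤ squarePrimitive₂ a l v - squarePrimitive₂ a l u ∧
      ∫⁻ z in Ioo u v, ENNReal.ofReal (2 * (a - z)) *
          (sqDiffDensity a ⋆ₗ sqDiffDensity a) (l ^ 2 - z ^ 2) =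
        ENNReal.ofReal (squarePrimitive₂ a l v - squarePrimitive₂ a l u) := by
  rcases huv.eq_or_lt with rfl | huv'
  · simp
  have hmem := fun z (hz : z ∈ Ioo u v) => sub_sq_mem_Ioo (t := l ^ 2) hu hz
  have hsub : Icc u v ⊆ {z | z ^ 2 < l ^ 2} := fun z hz => by
    have := pow_le_pow_left₀ (hu.trans hz.1) hz.2 2
    have := pow_pos ha 2
    exact mem_ofPred.2 (by linarith)
  refine lintegral_Ioo_mul_comp_sub_sq huv hva ((continuousOn_squarePrimitive₂ ?_).mono hsub)
    (fun z hz => hasDerivAt_squarePrimitive₂ hl (by linarith [(hmem z hz).1]))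
    fun z hz => sqDiffDensity_lconvolution_self_of_lt ha (by linarith [(hmem z hz).1])
      (by linarith [(hmem z hz).2])
  linarith [pow_pos (hu.trans_lt huv') 2]

theorem squarePrimitive₁_self_sub_zero {a l : ℝ} (ha : a ≠ 0) (hl : 0 < l) :
    2 * l * (squarePrimitive₁ a l l - squarePrimitive₁ a l 0) = a ^ 6 * P₁ a l := by
  have hself := sqrtPrimitive_of_sq_add_sq hl.le le_rfl (pow_pos hl 2) (by ring)
  have hzero := sqrtPrimitive_of_sq_add_sq le_rfl hl.le (pow_pos hl 2) (by ring)
  simp only [squarePrimitive₁, P₁, hself, hzero, sqrt_sq hl.le, sub_self, sqrt_zero, zero_div,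
    arccos_zero, div_self hl.ne', arccos_one, ne_eq, OfNat.ofNat_ne_zero, not_false_eq_true,
    zero_pow, sub_zero]
  field_simp
  ring

theorem squarePrimitive_sub_of_mem_Ioc_sqrt_two {a b l : ℝ} (ha : 0 < a) (hb : 0 < b) (hl : 0 < l)
    (hab : a ^ 2 + b ^ 2 = l ^ 2) :
    2 * l * (squarePrimitive₂ a l b - squarePrimitive₂ a l 0 +
      (squarePrimitive₁ a l a - squarePrimitive₁ a l b)) = a ^ 6 * P₂ a l := by
  have hb2 : l ^ 2 - a ^ 2 = b ^ 2 := sub_eq_of_eq_add' hab.symm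
  have ha2 : l ^ 2 - b ^ 2 = a ^ 2 := sub_eq_of_eq_add hab.symm
  have hsqrt_a := sqrtPrimitive_of_sq_add_sq ha.le hb.le (pow_pos hl 2) hab
  have hsqrt_b := sqrtPrimitive_of_sq_add_sq hb.le ha.le (pow_pos hl 2) ((add_comm _ _).trans hab)
  have hsqrt_b_b := sqrtPrimitive_of_sq_add_sq hb.le le_rfl (pow_pos hb 2) (by ring)
  have hsqrt_b_zero := sqrtPrimitive_of_sq_add_sq le_rfl hb.le (pow_pos hb 2) (by ring)
  have hmul_b := mulArccosPrimitive_of_sq_add_sq a ha.le ((add_comm _ _).trans hab)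
  have hmul_zero := mulArccosPrimitive_of_sq_add_sq a hl.le (by ring : 0 ^ 2 + l ^ 2 = l ^ 2)
  have hacos : arccos (b / l) = π / 2 - arccos (a / l) := by
    rw [← arcsin_div_eq_arccos_div ha.le hb.le hl hab, arcsin_eq_pi_div_two_sub_arccos]
  simp only [squarePrimitive₁, squarePrimitive₂, P₂, hb2, ha2, hsqrt_a, hsqrt_b, hsqrt_b_b,
    hsqrt_b_zero, hmul_b, hmul_zero, arccosPrimitive_of_sq_add_sq_eq ha hb hab,
    arccosPrimitive_zero, hacos, sqrt_sq ha.le, sqrt_sq hb.le, sqrt_sq hl.le, div_self ha.ne',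
    div_self hb.ne', arccos_one, arccos_zero, sub_self, sqrt_zero, zero_div, ne_eq,
    OfNat.ofNat_ne_zero, not_false_eq_true, zero_pow, sub_zero]
  rw [show l ^ 4 = (a ^ 2 + b ^ 2) ^ 2 by rw [hab]; ring, ← hab]
  field_simp
  ring

theorem squarePrimitive₂_sub_of_mem_Ioc_sqrt_three {a b l r : ℝ} (ha : 0 < a) (hb : 0 < b)
    (hr : 0 ≤ r) (hab : a ^ 2 + b ^ 2 = l ^ 2) (har : a ^ 2 + r ^ 2 = b ^ 2) :
    2 * l * (squarePrimitive₂ a l a - squarePrimitive₂ a l r) = a ^ 6 * P₃ a l := by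
  have hl2 : l ^ 2 = 2 * a ^ 2 + r ^ 2 := by linarith
  have hb2 : l ^ 2 - a ^ 2 = b ^ 2 := sub_eq_of_eq_add' hab.symm
  have hra : l ^ 2 - 2 * a ^ 2 = r ^ 2 := by linarith
  have hbr : b ^ 2 - r ^ 2 = a ^ 2 := sub_eq_of_eq_add har.symm
  have hba : b ^ 2 - a ^ 2 = r ^ 2 := sub_eq_of_eq_add' har.symm
  have hsq : (√2 * a) ^ 2 = 2 * a ^ 2 := by rw [mul_pow, sq_sqrt two_pos.le]
  have hsqrt_a := sqrtPrimitive_of_sq_add_sq ha.le hr (pow_pos hb 2) har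
  have hsqrt_r := sqrtPrimitive_of_sq_add_sq hr ha.le (pow_pos hb 2) ((add_comm _ _).trans har)
  have hmul_a := mulArccosPrimitive_of_sq_add_sq a hb.le hab
  have hmul_r : mulArccosPrimitive a l r = 2 * a ^ 2 * (π / 4) - a * a := by
    rw [mulArccosPrimitive_of_sq_add_sq (w := √2 * a) a (by positivity) (by linarith), hsq,
      arccos_div_sqrt_two_mul_self ha.ne', show 2 * a ^ 2 - a ^ 2 = a ^ 2 by ring, sqrt_sq ha.le]
  have hacos : arccos (r / b) = π / 2 - arccos (a / b) := by
    rw [← arcsin_div_eq_arccos_div ha.le hr hb har, arcsin_eq_pi_div_two_sub_arccos]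
  simp only [squarePrimitive₂, P₃, hb2, hbr, hba, hra, hsqrt_a, hsqrt_r, hmul_a, hmul_r, hacos,
    arccosPrimitive_self hb.le hab, arccosPrimitive_of_two_mul_sq_add_sq ha hb hr hab har,
    sqrt_sq ha.le, sqrt_sq hb.le, sqrt_sq hr]
  generalize arccos (a / b) = A
  generalize arccos (a ^ 2 / b ^ 2) = B
  rw [← har, hl2]
  field_simp
  ring

theorem sqDiffDensity_lconvolution_three_of_le {a l : ℝ} (ha : 0 < a) (hl : 0 < l) (hla : l ≤ a) :
    ENNReal.ofReal (2 * l) * (sqDiffDensity a ⋆ₗ (sqDiffDensity a ⋆ₗ sqDiffDensity a)) (l ^ 2) =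
      ENNReal.ofReal (a ^ 6 * P₁ a l) := by
  have hpiece := lintegral_squareDensity₁ (l := l) ha.le le_rfl hl.le hla
    (by simpa using pow_le_pow_left₀ hl.le hla 2) le_rfl
  have hzero : ∫⁻ z in Ioo l a, ENNReal.ofReal (2 * (a - z)) *
      (sqDiffDensity a ⋆ₗ sqDiffDensity a) (l ^ 2 - z ^ 2) = 0 :=
    lintegral_Ioo_mul_comp_sub_sq_eq_zero fun z hz =>
      sqDiffDensity_lconvolution_self_of_nonpos a (by
        linarith [(sub_sq_mem_Ioo (t := l ^ 2) hl.le hz).2])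
  rw [sqDiffDensity_lconvolution_apply, ← lintegral_Ioo_add_Ioo hl.le hla, hpiece.2, hzero,
    add_zero, ← ENNReal.ofReal_mul (by positivity), squarePrimitive₁_self_sub_zero ha.ne' hl]

theorem sqDiffDensity_lconvolution_three_of_mem_Ioc_sqrt_two {a l : ℝ} (ha : 0 < a) (hal : a < l)
    (hla : l ^ 2 ≤ 2 * a ^ 2) :
    ENNReal.ofReal (2 * l) * (sqDiffDensity a ⋆ₗ (sqDiffDensity a ⋆ₗ sqDiffDensity a)) (l ^ 2) =
      ENNReal.ofReal (a ^ 6 * P₂ a l) := by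
  have hl : 0 < l := ha.trans hal
  have hb2 : 0 < l ^ 2 - a ^ 2 := sub_pos.2 (pow_lt_pow_left₀ hal ha.le two_ne_zero)
  obtain ⟨b, hb, hab⟩ : ∃ b, 0 < b ∧ a ^ 2 + b ^ 2 = l ^ 2 :=
    ⟨√(l ^ 2 - a ^ 2), sqrt_pos.2 hb2, by rw [sq_sqrt hb2.le, add_sub_cancel]⟩
  have hba : b ≤ a := (sq_le_sq₀ hb.le ha.le).1 (by linarith)
  have hpiece₂ := lintegral_squareDensity₂ ha hl le_rfl hb.le hba (by linarith) (by linarith)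
  have hpiece₁ := lintegral_squareDensity₁ (l := l) ha.le hb.le hba le_rfl (by linarith)
    (by linarith [pow_pos hb 2])
  rw [sqDiffDensity_lconvolution_apply, ← lintegral_Ioo_add_Ioo hb.le hba, hpiece₂.2, hpiece₁.2,
    ← ENNReal.ofReal_add hpiece₂.1 hpiece₁.1, ← ENNReal.ofReal_mul (by positivity),
    squarePrimitive_sub_of_mem_Ioc_sqrt_two ha hb hl hab]

theorem sqDiffDensity_lconvolution_three_of_mem_Ioc_sqrt_three {a l : ℝ} (ha : 0 < a) (hl : 0 < l)
    (hal : 2 * a ^ 2 < l ^ 2) (hla : l ^ 2 ≤ 3 * a ^ 2) :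
    ENNReal.ofReal (2 * l) * (sqDiffDensity a ⋆ₗ (sqDiffDensity a ⋆ₗ sqDiffDensity a)) (l ^ 2) =
      ENNReal.ofReal (a ^ 6 * P₃ a l) := by
  have := pow_pos ha 2
  obtain ⟨b, hb, hab⟩ : ∃ b, 0 < b ∧ a ^ 2 + b ^ 2 = l ^ 2 :=
    ⟨√(l ^ 2 - a ^ 2), sqrt_pos.2 (by linarith), by rw [sq_sqrt (by linarith), add_sub_cancel]⟩
  obtain ⟨r, hr, har⟩ : ∃ r, 0 < r ∧ a ^ 2 + r ^ 2 = b ^ 2 :=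
    ⟨√(b ^ 2 - a ^ 2), sqrt_pos.2 (by linarith), by rw [sq_sqrt (by linarith), add_sub_cancel]⟩
  have hra : r ≤ a := (sq_le_sq₀ hr.le ha.le).1 (by linarith)
  have hpiece := lintegral_squareDensity₂ ha hl hr.le hra le_rfl (by linarith) (by linarith)
  have hzero : ∫⁻ z in Ioo 0 r, ENNReal.ofReal (2 * (a - z)) *
      (sqDiffDensity a ⋆ₗ sqDiffDensity a) (l ^ 2 - z ^ 2) = 0 :=
    lintegral_Ioo_mul_comp_sub_sq_eq_zero fun z hz =>
      sqDiffDensity_lconvolution_self_of_two_mul_sq_le (by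
        linarith [(sub_sq_mem_Ioo (t := l ^ 2) le_rfl hz).1])
  rw [sqDiffDensity_lconvolution_apply, ← lintegral_Ioo_add_Ioo hr.le hra, hpiece.2, hzero,
    zero_add, ← ENNReal.ofReal_mul (by positivity),
    squarePrimitive₂_sub_of_mem_Ioc_sqrt_three ha hb hr.le hab har]

theorem sqDiffDensity_lconvolution_three_of_nonpos (a : ℝ) {t : ℝ} (ht : t ≤ 0) :
    (sqDiffDensity a ⋆ₗ (sqDiffDensity a ⋆ₗ sqDiffDensity a)) t = 0 :=
  lconvolution_eq_zero_of_le_add (fun _ => sqDiffDensity_of_nonpos a)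
    (fun _ => sqDiffDensity_lconvolution_self_of_nonpos a) (ht.trans_eq (add_zero 0).symm)

theorem sqDiffDensity_lconvolution_three_of_three_mul_sq_le {a t : ℝ} (ht : 3 * a ^ 2 ≤ t) :
    (sqDiffDensity a ⋆ₗ (sqDiffDensity a ⋆ₗ sqDiffDensity a)) t = 0 :=
  lconvolution_eq_zero_of_add_le (fun _ => sqDiffDensity_of_sq_le)
    (fun _ => sqDiffDensity_lconvolution_self_of_two_mul_sq_le) (by linarith)

theorem sqDiffDensity_lconvolution_three_eq {a : ℝ} (ha : 0 < a) (l : ℝ) :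
    ENNReal.ofReal (2 * l) * (sqDiffDensity a ⋆ₗ (sqDiffDensity a ⋆ₗ sqDiffDensity a)) (l ^ 2) =
      ENNReal.ofReal (a ^ 6) * ENNReal.ofReal (P a l) := by
  have hsqrt₂ : (√2 * a) ^ 2 = 2 * a ^ 2 := by rw [mul_pow, sq_sqrt zero_le_two]
  have hsqrt₃ : (√3 * a) ^ 2 = 3 * a ^ 2 := by rw [mul_pow, sq_sqrt zero_le_three]
  rw [← ENNReal.ofReal_mul (by positivity), P]
  split_ifs with hneg hle hle₂ hle₃
  · rw [ENNReal.ofReal_of_nonpos (by linarith), zero_mul, mul_zero, ENNReal.ofReal_zero]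
  · rcases (not_lt.1 hneg).eq_or_lt with rfl | hl
    · simp [P₁]
    · exact sqDiffDensity_lconvolution_three_of_le ha hl hle
  · exact sqDiffDensity_lconvolution_three_of_mem_Ioc_sqrt_two ha (not_le.1 hle)
      (hsqrt₂ ▸ pow_le_pow_left₀ (not_lt.1 hneg) hle₂ 2)
  · exact sqDiffDensity_lconvolution_three_of_mem_Ioc_sqrt_three ha (ha.trans (not_le.1 hle))
      (hsqrt₂ ▸ pow_lt_pow_left₀ (not_le.1 hle₂) (by positivity) two_ne_zero)
      (hsqrt₃ ▸ pow_le_pow_left₀ (not_lt.1 hneg) hle₃ 2)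
  · rw [sqDiffDensity_lconvolution_three_of_three_mul_sq_le
      (hsqrt₃ ▸ pow_le_pow_left₀ (by positivity) (not_le.1 hle₃).le 2), mul_zero, mul_zero,
      ENNReal.ofReal_zero]

theorem volume_restrict_cube (a : ℝ) :
    volume.restrict (cube a) =
      (Measure.pi fun _ : Fin 3 => volume.restrict (Icc 0 a)).map (WithLp.toLp 2) := by
  have hcube : WithLp.toLp 2 ⁻¹' cube a = univ.pi fun _ : Fin 3 => Icc 0 a := by
    ext x
    simp only [cube, mem_preimage, mem_ofPred_eq, mem_univ_pi]
  have hmap := ((PiLp.volume_preserving_toLp (Fin 3)).restrict_preimage_emb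
    (MeasurableEquiv.toLp 2 (Fin 3 → ℝ)).measurableEmbedding (cube a)).map_eq
  rw [← hmap, hcube, volume_pi, Measure.restrict_pi_pi]

theorem map_sum_pi_sq_sub (a : ℝ) :
    (Measure.pi fun _ : Fin 3 => ((volume.restrict (Icc 0 a)).prod (volume.restrict (Icc 0 a))).map
        fun p => (p.1 - p.2) ^ 2).map (fun x => ∑ i, x i) =
      volume.withDensity (sqDiffDensity a ⋆ₗ (sqDiffDensity a ⋆ₗ sqDiffDensity a)) := by
  have hk := measurable_sqDiffDensity a
  rw [map_sum_pi_fin_succ, map_sum_pi_fin_succ, map_sum_pi_fin_succ,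
    map_sum_pi_of_isEmpty, Measure.conv_dirac_zero,
    map_sq_sub_prod_restrict_Icc, conv_withDensity_eq_lconvolution hk hk,
    conv_withDensity_eq_lconvolution hk (measurable_lconvolution volume hk hk)]

theorem pushforward_dist_eq (a : ℝ) (ha : 0 < a) :
    Measure.map (fun p : EuclideanSpace ℝ (Fin 3) × EuclideanSpace ℝ (Fin 3) =>
        dist p.1 p.2)
      ((volume.restrict (cube a)).prod (volume.restrict (cube a))) =
      ENNReal.ofReal (a ^ 6) •
        volume.withDensity (fun l => ENNReal.ofReal (P a l)) := by
  have hk := measurable_sqDiffDensity a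
  rw [volume_restrict_cube, map_dist_prod_map_toLp, map_sum_pi_sq_sub,
    map_sqrt_withDensity (by fun_prop) fun t => sqDiffDensity_lconvolution_three_of_nonpos a,
    ← withDensity_smul' _ _ ENNReal.ofReal_ne_top]
  congr 1 with l
  exact sqDiffDensity_lconvolution_three_eq ha l
end
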